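/- arXiv:0908.3521 — 2 statements merged into one kernel-verified Lean document; each statement's English description precedes it below -/
import Mathlib

section
/- Let p be an odd prime, Δ an integer not divisible by p, set ε = 1 if the image of Δ in ℤ/pℤ is a square and ε = −1 otherwise, and let k be a natural number. Consider the quadratic form in n = 2k+2 variables B(x₀, x₁, …, x_{2k+1}) = x₀² − Δ·x₁² + ∑_{i=1}^{k} x_{2i}·x_{2i+1}. Let t be a nonzero integer with p-adic valuation T, and for a natural number ℓ let X_ℓ = N_ℓ / p^{nℓ}, where N_ℓ is the number of v ∈ (ℤ/p^ℓℤ)^n with B(v) = t̄². Then for every real z with |z| < 1, setting w = z/p^{k+1}, the series ∑_{ℓ≥0} z^ℓ · X_ℓ converges with sum (1 − ε·w/p)(1 − ε·w^{2T+1}) / ((1 − z/p)(1 − ε·w)). -/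
def Bf {R : Type*} [CommRing R] (Δ : ℤ) (k : ℕ) (v : Fin (2 * k + 2) → R) : R :=
  v ⟨0, by omega⟩ ^ 2 - (Δ : R) * v ⟨1, by omega⟩ ^ 2 +
    ∑ i : Fin k, v ⟨2 * i + 2, by have := i.isLt; omega⟩ * v ⟨2 * i + 3, by have := i.isLt; omega⟩

def Bl {R : Type*} [CommRing R] (Δ : ℤ) (k : ℕ) (v u : Fin (2 * k + 2) → R) : R :=
  2 * v ⟨0, by omega⟩ * u ⟨0, by omega⟩ - 2 * (Δ : R) * v ⟨1, by omega⟩ * u ⟨1, by omega⟩ +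
    ∑ i : Fin k, (v ⟨2 * i + 2, by have := i.isLt; omega⟩ * u ⟨2 * i + 3, by have := i.isLt; omega⟩
      + u ⟨2 * i + 2, by have := i.isLt; omega⟩ * v ⟨2 * i + 3, by have := i.isLt; omega⟩)

theorem Bf_add {R : Type*} [CommRing R] (Δ : ℤ) (k : ℕ) (v u : Fin (2 * k + 2) → R) (s : R) :
    Bf Δ k (fun i => v i + s * u i) = Bf Δ k v + s * Bl Δ k v u + s ^ 2 * Bf Δ k u := by
  have : ∀ (f g h e : Fin k → R), ∑ i, (f i + s * g i) * (h i + s * e i) =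
      ∑ i, f i * h i + s * ∑ i, (f i * e i + g i * h i) + s ^ 2 * ∑ i, g i * e i := by
    intro f g h e
    rw [Finset.mul_sum, Finset.mul_sum, ← Finset.sum_add_distrib, ← Finset.sum_add_distrib]
    exact Finset.sum_congr rfl fun i _ => by ring
  unfold Bf Bl
  rw [this]
  ring

theorem Bf_smul {R : Type*} [CommRing R] (Δ : ℤ) (k : ℕ) (u : Fin (2 * k + 2) → R) (s : R) :
    Bf Δ k (fun i => s * u i) = s ^ 2 * Bf Δ k u := by
  unfold Bf
  rw [mul_add, Finset.mul_sum]
  congr 1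
  · ring
  · exact Finset.sum_congr rfl fun i _ => by ring

theorem Bf_map {R S : Type*} [CommRing R] [CommRing S] (f : R →+* S) (Δ : ℤ) (k : ℕ)
    (v : Fin (2 * k + 2) → R) : f (Bf Δ k v) = Bf Δ k (fun i => f (v i)) := by
  simp [Bf]

theorem Bl_map {R S : Type*} [CommRing R] [CommRing S] (f : R →+* S) (Δ : ℤ) (k : ℕ)
    (v u : Fin (2 * k + 2) → R) :
    f (Bl Δ k v u) = Bl Δ k (fun i => f (v i)) (fun i => f (u i)) := by
  have h2 : f 2 = 2 := map_ofNat f 2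
  simp [Bl, h2]

/-! counting over the field -/

theorem hyp_count {F : Type*} [Field F] [Fintype F] [DecidableEq F] (d : F) :
    (∑ x : F, ∑ y : F, if x * y = d then (1 : ℤ) else 0) =
      (Fintype.card F - 1 : ℤ) + if d = 0 then (Fintype.card F : ℤ) else 0 := by
  rw [← Finset.sum_erase_add _ _ (Finset.mem_univ (0 : F))]
  congr 1
  · rw [Finset.sum_congr rfl (g := fun _ => (1 : ℤ))]
    · simp [Finset.card_erase_of_mem, Nat.cast_sub Fintype.card_pos]
    · intro x hx
      have hx : x ≠ 0 := by simpa using hx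
      rw [Finset.sum_eq_single (d / x)]
      · simp [mul_div_cancel₀ _ hx]
      · intro y _ hy
        rw [if_neg]
        rintro rfl
        apply hy
        field_simp
      · simp
  · simp only [zero_mul, eq_comm (a := (0 : F))]
    split_ifs <;> simp

def plane {F : Type*} [Field F] [Fintype F] [DecidableEq F] (D c : F) : ℤ :=
  ∑ x : F, ∑ y : F, if x ^ 2 - D * y ^ 2 = c then (1 : ℤ) else 0

theorem plane_eq {F : Type*} [Field F] [Fintype F] [DecidableEq F] (D c : F) :
    plane D c = ((Finset.univ.filter fun q : F × F => q.1 ^ 2 - D * q.2 ^ 2 = c).card : ℤ) := by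
  rw [Finset.card_filter, Fintype.sum_prod_type]
  push_cast
  rfl

theorem plane_zero {F : Type*} [Field F] [Fintype F] [DecidableEq F] (hF : ringChar F ≠ 2) (D : F) :
    plane D 0 = Fintype.card F + (Fintype.card F - 1) * quadraticChar F D := by
  unfold plane
  rw [Finset.sum_comm]
  have h1 : ∀ y : F, (∑ x : F, if x ^ 2 - D * y ^ 2 = 0 then (1 : ℤ) else 0) =
      quadraticChar F (D * y ^ 2) + 1 := by
    intro y
    rw [← quadraticChar_card_sqrts hF, Finset.sum_boole]
    congr 2
    ext x
    simp [sub_eq_zero]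
  simp only [h1, Finset.sum_add_distrib, map_mul]
  rw [← Finset.mul_sum, ← Finset.sum_erase_add _ _ (Finset.mem_univ (0 : F)),
    Finset.sum_congr rfl (g := fun _ => (1 : ℤ))]
  · simp [Finset.card_erase_of_mem, Nat.cast_sub Fintype.card_pos]
    ring
  · intro x hx
    have hx : x ≠ 0 := by simpa using hx
    exact quadraticChar_sq_one' hx

theorem plane_le {F : Type*} [Field F] [Fintype F] [DecidableEq F] (hF : ringChar F ≠ 2) (D c d : F)
    (hD : D ≠ 0) (hc : c ≠ 0) : plane D d ≤ plane D (c * d) := by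
  obtain ⟨a, b, hab⟩ : ∃ a b : F, a ^ 2 - D * b ^ 2 = c := by
    obtain ⟨a, b, h⟩ := FiniteField.exists_root_sum_quadratic
      (f := Polynomial.X ^ 2 - Polynomial.C c) (g := Polynomial.C (-D) * Polynomial.X ^ 2)
      (by compute_degree!) (by compute_degree!)
      (FiniteField.odd_card_of_char_ne_two hF)
    refine ⟨a, b, ?_⟩
    simp at h
    linear_combination h
  rw [plane_eq, plane_eq]
  norm_cast
  apply Finset.card_le_card_of_injOn
    (fun q => (a * q.1 + D * b * q.2, a * q.2 + b * q.1))
  · intro q hq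
    simp at hq ⊢
    rw [← hab, ← hq]
    ring
  · rintro ⟨x, y⟩ - ⟨x', y'⟩ - h
    simp at h
    obtain ⟨h1, h2⟩ := h
    ext
    · apply mul_left_cancel₀ hc
      simp only
      rw [← hab]
      linear_combination a * h1 - D * b * h2
    · apply mul_left_cancel₀ hc
      simp only
      rw [← hab]
      linear_combination a * h2 - b * h1

theorem plane_ne {F : Type*} [Field F] [Fintype F] [DecidableEq F] (hF : ringChar F ≠ 2) (D c : F)
    (hD : D ≠ 0) (hc : c ≠ 0) : plane D c = Fintype.card F - quadraticChar F D := by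
  have h1 : ∀ c : F, c ≠ 0 → plane D c = plane D 1 := by
    intro c hc
    apply le_antisymm
    · have := plane_le hF D c⁻¹ c hD (inv_ne_zero hc)
      rwa [inv_mul_cancel₀ hc] at this
    · simpa using plane_le hF D c 1 hD hc
  have htot : ∑ c : F, plane D c = (Fintype.card F : ℤ) ^ 2 := by
    unfold plane
    rw [Finset.sum_comm]
    have : ∀ x : F, (∑ y : F, ∑ x_1 : F, if x ^ 2 - D * x_1 ^ 2 = y then (1:ℤ) else 0) =
        Fintype.card F := by
      intro x
      rw [Finset.sum_comm]
      simp
    simp only [this, Finset.sum_const, Finset.card_univ, nsmul_eq_mul]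
    ring
  rw [← Finset.sum_erase_add _ _ (Finset.mem_univ (0 : F)), plane_zero hF,
    Finset.sum_congr rfl (g := fun _ => plane D 1) (fun x hx => h1 x (by simpa using hx))] at htot
  simp [Finset.card_erase_of_mem, Nat.cast_sub Fintype.card_pos, -quadraticChar_apply] at htot
  rw [h1 c hc]
  have h2 : (1 : ℤ) < Fintype.card F := by exact_mod_cast Fintype.one_lt_card
  have h3 : (Fintype.card F - 1 : ℤ) ≠ 0 := by omega
  apply mul_left_cancel₀ h3
  linear_combination htot

def splitEquiv (F : Type*) (k : ℕ) :
    (Fin (2 * (k + 1) + 2) → F) ≃ (Fin (2 * k + 2) → F) × (F × F) where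
  toFun v := (fun i => v ⟨i, by omega⟩, (v ⟨2 * k + 2, by omega⟩, v ⟨2 * k + 3, by omega⟩))
  invFun q i := if h : (i : ℕ) < 2 * k + 2 then q.1 ⟨i, h⟩ else
    if (i : ℕ) = 2 * k + 2 then q.2.1 else q.2.2
  left_inv v := by
    funext i
    dsimp
    split_ifs with h1 h2
    · rfl
    · congr 1; ext; simp [h2]
    · congr 1; ext; simp; omega
  right_inv q := by
    ext <;> simp

theorem count_field {F : Type*} [Field F] [Fintype F] [DecidableEq F] (hF : ringChar F ≠ 2) (Δ : ℤ)
    (hD : (Δ : F) ≠ 0) (k : ℕ) (c : F) :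
    (∑ v : Fin (2 * k + 2) → F, if Bf Δ k v = c then (1 : ℤ) else 0) =
      (Fintype.card F : ℤ) ^ (2 * k + 1) + quadraticChar F (Δ : F) * 
      (if c = 0 then (Fintype.card F : ℤ) ^ (k + 1) - (Fintype.card F : ℤ) ^ k 
        else - (Fintype.card F : ℤ) ^ k) := by
  induction k generalizing c with
  | zero =>
    have : (∑ v : Fin (2 * 0 + 2) → F, if Bf Δ 0 v = c then (1 : ℤ) else 0) = plane (Δ : F) c := by
      unfold plane
      rw [← Fintype.sum_prod_type' (f := fun x y => if x ^ 2 - (Δ : F) * y ^ 2 = c then (1 : ℤ) else 0)]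
      refine Fintype.sum_equiv (finTwoArrowEquiv F) _ _ ?_
      intro v
      simp [Bf]
    rw [this]
    split_ifs with h
    · rw [h, plane_zero hF]; ring
    · rw [plane_ne hF _ _ hD h]; ring
  | succ k ih =>
    have : (∑ v : Fin (2 * (k + 1) + 2) → F, if Bf Δ (k + 1) v = c then (1 : ℤ) else 0) = 
        ∑ v : Fin (2 * k + 2) → F, ∑ x : F, ∑ y : F, if x * y = c - Bf Δ k v then (1 : ℤ) else 0 := by
      simp_rw [← Fintype.sum_prod_type']
      refine Fintype.sum_equiv (splitEquiv F k) _ _ ?_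
      intro v
      simp [Bf, splitEquiv, Fin.sum_univ_castSucc, eq_sub_iff_add_eq', add_assoc]
    rw [this]
    simp_rw [hyp_count, sub_eq_zero, @eq_comm F c (Bf Δ k _)]
    rw [Finset.sum_add_distrib]
    have h2 : ∀ v : Fin (2 * k + 2) → F, (if Bf Δ k v = c then (Fintype.card F : ℤ) else 0) =
      Fintype.card F * if Bf Δ k v = c then 1 else 0 := by intro v; split_ifs <;> simp
    simp_rw [h2]
    rw [← Finset.mul_sum, ih]
    simp
    split_ifs <;> ring

/-! lifting -/

theorem card_preimage {G H : Type*} [AddCommGroup G] [AddCommGroup H] [Fintype G] [DecidableEq H]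
    (f : G →+ H) (S : Finset H) (hS : S ⊆ Finset.univ.image f) :
    (Finset.univ.filter fun g => f g ∈ S).card * (Finset.univ.image f).card =
      S.card * Fintype.card G := by
  have key : ∀ S : Finset H, S ⊆ Finset.univ.image f →
      (Finset.univ.filter fun g => f g ∈ S).card =
        S.card * (Finset.univ.filter fun g => f g = 0).card := by
    intro S hS
    rw [Finset.card_eq_sum_card_fiberwise (f := f) (t := S) (fun g hg => by simpa using hg)]
    rw [Finset.sum_congr rfl (g := fun _ => (Finset.univ.filter fun g => f g = 0).card)]
    · simp
    · intro s hs
      rw [Finset.filter_filter]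
      have h1 : (Finset.univ.filter fun g => f g ∈ S ∧ f g = s) =
          Finset.univ.filter fun g => f g = s := by
        ext g
        simp
        rintro rfl
        exact hs
      rw [h1]
      obtain ⟨g, -, hg⟩ := Finset.mem_image.1 (hS hs)
      exact AddMonoidHom.card_fiber_eq_of_mem_range f ⟨g, hg⟩ ⟨0, map_zero f⟩
  have h2 := key _ (Finset.Subset.refl (Finset.univ.image f))
  simp at h2
  rw [key S hS, h2]
  ring

def red (p m : ℕ) : ZMod (p ^ (m + 1)) →+* ZMod p :=
  ZMod.castHom (dvd_pow_self p (Nat.succ_ne_zero m)) (ZMod p)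

section
variable (p : ℕ) [hp : Fact p.Prime]

instance (m : ℕ) : NeZero (p ^ m) := ⟨pow_ne_zero _ hp.out.ne_zero⟩

theorem card_res (m : ℕ) (a : ZMod p) :
    (Finset.univ.filter fun x : ZMod (p ^ (m + 1)) => red p m x = a).card = p ^ m := by
  have hsurj : Function.Surjective (red p m) := ZMod.castHom_surjective _
  have h := card_preimage (red p m).toAddMonoidHom {a} (by
    intro x _
    obtain ⟨y, hy⟩ := hsurj x
    simp only [Finset.mem_image]
    exact ⟨y, Finset.mem_univ _, hy⟩)
  have h3 : Finset.univ.image (red p m).toAddMonoidHom = Finset.univ := by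
    ext x
    obtain ⟨y, hy⟩ := hsurj x
    simp only [Finset.mem_image, Finset.mem_univ, iff_true]
    exact ⟨y, trivial, hy⟩
  rw [h3] at h
  simp only [Finset.mem_singleton, Finset.card_univ, ZMod.card, Finset.card_singleton, one_mul,
    pow_succ] at h
  exact Nat.eq_of_mul_eq_mul_right hp.out.pos h

theorem unit_of_red (m : ℕ) (x : ZMod (p ^ (m + 1))) (hx : red p m x ≠ 0) : IsUnit x := by
  obtain ⟨n, rfl⟩ := ZMod.natCast_zmod_surjective x
  rw [ZMod.isUnit_iff_coprime]
  apply Nat.Coprime.pow_right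
  rw [Nat.coprime_comm, hp.out.coprime_iff_not_dvd]
  rw [map_natCast] at hx
  rwa [Ne, ZMod.natCast_eq_zero_iff] at hx

theorem exists_coord (hp2 : p ≠ 2) (Δ : ℤ) (hD : (Δ : ZMod p) ≠ 0) (k : ℕ)
    (a : Fin (2 * k + 2) → ZMod p) (ha : a ≠ 0) :
    ∃ i, Bl Δ k a (Pi.single i 1) ≠ 0 := by
  have h2 : (2 : ZMod p) ≠ 0 := by
    intro h
    have : ((2 : ℕ) : ZMod p) = 0 := by exact_mod_cast h
    rw [ZMod.natCast_eq_zero_iff] at this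
    exact hp2 ((Nat.prime_dvd_prime_iff_eq hp.out Nat.prime_two).1 this)
  by_contra! h
  apply ha
  funext i
  obtain ⟨i, hi⟩ := i
  have e0 := h ⟨0, by omega⟩
  have e1 := h ⟨1, by omega⟩
  rcases Nat.lt_or_ge i 2 with h3 | h3
  · interval_cases i
    · simp [Bl, h2] at e0
      simpa using e0
    · simp [Bl, h2, hD] at e1
      simpa using e1
  · obtain ⟨j, hj⟩ : ∃ j, i = 2 * j + 2 ∨ i = 2 * j + 3 := ⟨(i - 2) / 2, by omega⟩
    have hjk : j < k := by omega
    have q1 : ∀ x : Fin k, 2 * (x : ℕ) = 2 * j ↔ x = ⟨j, hjk⟩ := by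
      intro x; rw [Fin.ext_iff]; simp 
    have q2 : ∀ x : Fin k, ¬ (2 * (x : ℕ) = 2 * j + 1) := by intro x; omega
    have q3 : ∀ x : Fin k, ¬ (2 * (x : ℕ) + 3 = 2 * j + 2) := by intro x; omega
    rcases hj with rfl | rfl
    · have e := h ⟨2 * j + 3, by omega⟩
      simp only [Bl, Pi.single_apply, Fin.mk.injEq] at e
      simp [q1, q2] at e
      simpa using e
    · have e := h ⟨2 * j + 2, by omega⟩
      simp only [Bl, Pi.single_apply, Fin.mk.injEq] at e
      simp [q1, q3] at e
      simpa using e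

theorem card_pi {n : ℕ} (m : ℕ) (b : Fin n → ZMod p) :
    (Finset.univ.filter fun w : Fin n → ZMod (p ^ (m + 1)) => ∀ j, red p m (w j) = b j).card =
      p ^ (m * n) := by
  have : (Finset.univ.filter fun w : Fin n → ZMod (p ^ (m + 1)) => ∀ j, red p m (w j) = b j) =
      Fintype.piFinset fun j => Finset.univ.filter fun x => red p m x = b j := by
    ext w; simp
  rw [this, Fintype.card_piFinset, Finset.prod_congr rfl (fun j _ => card_res p m (b j))]
  simp [pow_mul]

theorem card_pi' {n : ℕ} (m : ℕ) (b : Fin (n + 1) → ZMod p) (i : Fin (n + 1))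
    (c : ZMod (p ^ (m + 1))) (hc : red p m c = b i) :
    (Finset.univ.filter fun w : Fin (n + 1) → ZMod (p ^ (m + 1)) =>
      (∀ j, red p m (w j) = b j) ∧ w i = c).card = p ^ (m * n) := by
  have : (Finset.univ.filter fun w : Fin (n + 1) → ZMod (p ^ (m + 1)) =>
      (∀ j, red p m (w j) = b j) ∧ w i = c) =
      Fintype.piFinset fun j => Finset.univ.filter fun x => red p m x = b j ∧ (j = i → x = c) := by
    ext w
    simp only [Finset.mem_filter, Finset.mem_univ, true_and, Fintype.mem_piFinset]
    constructor
    · rintro ⟨h1, h2⟩ j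
      exact ⟨h1 j, by rintro rfl; exact h2⟩
    · intro h
      exact ⟨fun j => (h j).1, (h i).2 rfl⟩
  rw [this, Fintype.card_piFinset, ← Finset.prod_erase_mul _ _ (Finset.mem_univ i)]
  rw [Finset.prod_congr rfl (g := fun _ => p ^ m)]
  · have h1 : (Finset.univ.filter fun x => red p m x = b i ∧ (i = i → x = c)) = {c} := by
      ext x
      simp only [Finset.mem_filter, Finset.mem_univ, true_and, Finset.mem_singleton]
      constructor
      · rintro ⟨_, h⟩; exact h trivial
      · rintro rfl; exact ⟨hc, fun _ => rfl⟩
    rw [h1]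
    simp [pow_mul]
  · intro j hj
    have hj : j ≠ i := by simpa using hj
    simp only [hj, false_imp_iff, and_true]
    exact card_res p m (b j)

theorem hensel (hp2 : p ≠ 2) (Δ : ℤ) (hD : (Δ : ZMod p) ≠ 0) (k m : ℕ)
    (a : Fin (2 * k + 2) → ZMod p) (ha : a ≠ 0) (c : ZMod (p ^ (m + 1)))
    (hc : red p m c = Bf Δ k a) :
    (Finset.univ.filter fun v : Fin (2 * k + 2) → ZMod (p ^ (m + 1)) =>
      (∀ j, red p m (v j) = a j) ∧ Bf Δ k v = c).card = p ^ (m * (2 * k + 1)) := by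
  obtain ⟨i, hi⟩ := exists_coord p hp2 Δ hD k a ha
  let b := Function.update a i (Bf Δ k a)
  rw [← card_pi' p m b i c (by simp [b, hc])]
  let Fm : (Fin (2 * k + 2) → ZMod (p ^ (m + 1))) → (Fin (2 * k + 2) → ZMod (p ^ (m + 1))) :=
    fun v => Function.update v i (Bf Δ k v)
  set A := Finset.univ.filter fun v : Fin (2 * k + 2) → ZMod (p ^ (m + 1)) =>
    (∀ j, red p m (v j) = a j) with hA
  set C := Finset.univ.filter fun v : Fin (2 * k + 2) → ZMod (p ^ (m + 1)) =>
    (∀ j, red p m (v j) = b j) with hC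
  have mA : ∀ v, v ∈ A ↔ ∀ j, red p m (v j) = a j := fun v => by simp [hA]
  have mC : ∀ v, v ∈ C ↔ ∀ j, red p m (v j) = b j := fun v => by simp [hC]
  have hBred : ∀ v ∈ A, red p m (Bf Δ k v) = Bf Δ k a := by
    intro v hv
    rw [Bf_map]
    congr 1
    funext j
    exact (Finset.mem_filter.1 hv).2 j
  have hmaps : Set.MapsTo Fm A C := by
    intro v hv
    have hv' := (Finset.mem_filter.1 hv).2
    simp only [hC, Finset.coe_filter, Finset.mem_univ, true_and, Set.mem_ofPred_eq]
    intro j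
    by_cases hj : j = i
    · subst hj
      simp only [Fm, b, Function.update_self]
      exact hBred v hv
    · simp only [Fm, b, Function.update_of_ne hj]
      exact hv' j
  have hinj : Set.InjOn Fm A := by
    intro v hv v' hv' h
    have hv1 := (Finset.mem_filter.1 hv).2
    have hv2 := (Finset.mem_filter.1 hv').2
    have hne : ∀ j, j ≠ i → v j = v' j := by
      intro j hj
      have := congrFun h j
      simpa [Fm, Function.update_of_ne hj] using this
    have heq : Bf Δ k v = Bf Δ k v' := by
      have := congrFun h i
      simpa [Fm] using this
    have hv3 : v = fun j => v' j + (v i - v' i) * (Pi.single i 1 : Fin (2 * k + 2) → ZMod (p ^ (m + 1))) j := by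
      funext j
      by_cases hj : j = i
      · subst hj; simp
      · simp [hj, hne j hj]
    have h4 := Bf_add Δ k v' (Pi.single i 1) (v i - v' i)
    rw [← hv3, heq] at h4
    have hu : IsUnit (Bl Δ k v' (Pi.single i 1) + (v i - v' i) * Bf Δ k (Pi.single i 1)) := by
      apply unit_of_red
      rw [map_add, map_mul, map_sub, hv1, hv2, sub_self, zero_mul, add_zero, Bl_map]
      convert hi using 2
      · funext j; exact hv2 j
      · funext j
        by_cases hj : j = i
        · subst hj; simp
        · simp [hj]
    have h5 : (v i - v' i) *
        (Bl Δ k v' (Pi.single i 1) + (v i - v' i) * Bf Δ k (Pi.single i 1)) = 0 := by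
      linear_combination -h4
    have h6 := hu.mul_left_eq_zero.1 h5
    funext j
    by_cases hj : j = i
    · subst hj; exact sub_eq_zero.1 h6
    · exact hne j hj
  have hsurj : Set.SurjOn Fm A C := by
    apply Finset.surjOn_of_injOn_of_card_le Fm hmaps hinj
    rw [hA, hC, card_pi, card_pi]
  apply Finset.card_bij (fun v _ => Fm v)
  · intro v hv
    simp only [Finset.mem_filter, Finset.mem_univ, true_and] at hv ⊢
    have : v ∈ A := (mA _).2 hv.1
    have h1 := hmaps this
    refine ⟨(mC _).1 h1, by simp [Fm, hv.2]⟩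
  · intro v hv v' hv' h
    simp only [Finset.mem_filter, Finset.mem_univ, true_and] at hv hv'
    exact hinj ((mA _).2 hv.1) ((mA _).2 hv'.1) h
  · intro w hw
    simp only [Finset.mem_filter, Finset.mem_univ, true_and] at hw
    obtain ⟨v, hv, rfl⟩ := hsurj (show w ∈ (C : Set _) from (mC _).2 hw.1)
    refine ⟨v, ?_, rfl⟩
    simp only [Finset.mem_filter, Finset.mem_univ, true_and]
    exact ⟨(mA _).1 hv, by simpa [Fm] using hw.2⟩

def NN (Δ : ℤ) (k ℓ : ℕ) (c : ZMod (p ^ ℓ)) : ℕ :=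
  (Finset.univ.filter fun v : Fin (2 * k + 2) → ZMod (p ^ ℓ) => Bf Δ k v = c).card

def II (Δ : ℤ) (k m : ℕ) (c : ZMod (p ^ (m + 1))) : ℕ :=
  (Finset.univ.filter fun v : Fin (2 * k + 2) → ZMod (p ^ (m + 1)) =>
    (∀ j, red p m (v j) = 0) ∧ Bf Δ k v = c).card

theorem Bf_zero {R : Type*} [CommRing R] (Δ : ℤ) (k : ℕ) :
    Bf Δ k (0 : Fin (2 * k + 2) → R) = 0 := by
  simp [Bf]

theorem NN_split (hp2 : p ≠ 2) (Δ : ℤ) (hD : (Δ : ZMod p) ≠ 0) (k m : ℕ)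
    (c : ZMod (p ^ (m + 1))) :
    NN p Δ k (m + 1) c =
      (Finset.univ.filter fun a : Fin (2 * k + 2) → ZMod p => a ≠ 0 ∧ Bf Δ k a = red p m c).card *
        p ^ (m * (2 * k + 1)) + II p Δ k m c := by
  unfold NN
  rw [Finset.card_eq_sum_card_fiberwise
    (f := fun v : Fin (2 * k + 2) → ZMod (p ^ (m + 1)) => fun j => red p m (v j))
    (t := Finset.univ) (fun v _ => by simp)]
  rw [← Finset.sum_erase_add _ _ (Finset.mem_univ (0 : Fin (2 * k + 2) → ZMod p))]
  congr 1
  · rw [Finset.card_filter, Finset.sum_mul,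
      ← Finset.sum_erase_add (a := (0 : Fin (2 * k + 2) → ZMod p)) _ _ (Finset.mem_univ _)]
    simp only [ne_eq, not_true_eq_false, false_and, if_false, zero_mul, add_zero]
    apply Finset.sum_congr rfl
    intro a ha
    have ha : a ≠ 0 := by simpa using ha
    rw [Finset.filter_filter]
    by_cases hc : Bf Δ k a = red p m c
    · simp only [ha, hc, not_false_eq_true, and_self, if_true, one_mul]
      rw [← hensel p hp2 Δ hD k m a ha c hc.symm]
      congr 1
      ext v
      simp only [Finset.mem_filter, Finset.mem_univ, true_and, funext_iff]
      tauto
    · simp only [hc, and_false, if_false, zero_mul]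
      rw [Finset.card_eq_zero, Finset.filter_eq_empty_iff]
      rintro v - ⟨h1, h2⟩
      apply hc
      rw [← h1, ← h2, Bf_map]
  · unfold II
    rw [Finset.filter_filter]
    congr 1
    ext v
    simp only [Finset.mem_filter, Finset.mem_univ, true_and, funext_iff, Pi.zero_apply]
    tauto

theorem II_of_ne (Δ : ℤ) (k m : ℕ) (c : ZMod (p ^ (m + 1))) (hc : red p m c ≠ 0) :
    II p Δ k m c = 0 := by
  unfold II
  rw [Finset.card_eq_zero, Finset.filter_eq_empty_iff]
  rintro v - ⟨h1, h2⟩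
  apply hc
  rw [← h2, Bf_map]
  simp only [h1]
  exact Bf_zero Δ k

theorem II_one (Δ : ℤ) (k : ℕ) (c : ZMod (p ^ (0 + 1))) (hc : red p 0 c = 0) :
    II p Δ k 0 c = 1 := by
  have h0 : ∀ x : ZMod (p ^ (0 + 1)), red p 0 x = 0 → x = 0 := by
    intro x hx
    have := card_res p 0 0
    rw [pow_zero, Finset.card_eq_one] at this
    obtain ⟨y, hy⟩ := this
    have h1 : x ∈ ({y} : Finset _) := by rw [← hy]; simpa using hx
    have h2 : (0 : ZMod (p ^ (0 + 1))) ∈ ({y} : Finset _) := by rw [← hy]; simp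
    rw [Finset.mem_singleton] at h1 h2
    rw [h1, h2]
  unfold II
  rw [Finset.card_eq_one]
  refine ⟨0, ?_⟩
  ext v
  simp only [Finset.mem_filter, Finset.mem_univ, true_and, Finset.mem_singleton]
  constructor
  · rintro ⟨h1, -⟩
    funext j
    exact h0 _ (h1 j)
  · rintro rfl
    refine ⟨fun j => by simp, ?_⟩
    rw [Bf_zero, h0 c hc]

theorem red_eq_zero (m : ℕ) (x : ZMod (p ^ (m + 1))) :
    red p m x = 0 ↔ ∃ y, x = (p : ZMod (p ^ (m + 1))) * y := by
  constructor
  · intro h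
    obtain ⟨n, rfl⟩ := ZMod.natCast_zmod_surjective x
    rw [map_natCast, ZMod.natCast_eq_zero_iff] at h
    obtain ⟨y, rfl⟩ := h
    exact ⟨y, by push_cast; rfl⟩
  · rintro ⟨y, rfl⟩
    simp

def rho (m : ℕ) : ZMod (p ^ (m + 2)) →+* ZMod (p ^ m) :=
  ZMod.castHom (pow_dvd_pow p (by omega)) (ZMod (p ^ m))

theorem sq_mul_eq_zero (m : ℕ) (x : ZMod (p ^ (m + 2))) :
    (p : ZMod (p ^ (m + 2))) ^ 2 * x = 0 ↔ rho p m x = 0 := by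
  obtain ⟨n, rfl⟩ := ZMod.natCast_zmod_surjective x
  rw [map_natCast, ZMod.natCast_eq_zero_iff]
  have : (p : ZMod (p ^ (m + 2))) ^ 2 * (n : ZMod (p ^ (m + 2))) =
    ((p ^ 2 * n : ℕ) : ZMod (p ^ (m + 2))) := by push_cast; rfl
  rw [this, ZMod.natCast_eq_zero_iff, add_comm m 2, pow_add]
  exact Nat.mul_dvd_mul_iff_left (pow_pos hp.out.pos 2)

theorem II_succ (Δ : ℤ) (k m : ℕ) (t : ℤ) :
    II p Δ k (m + 1) (((p * t : ℤ) : ZMod (p ^ (m + 2))) ^ 2) =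
      p ^ (2 * k + 2) * NN p Δ k m ((t : ZMod (p ^ m)) ^ 2) := by
  let μ : (Fin (2 * k + 2) → ZMod (p ^ (m + 2))) →+ (Fin (2 * k + 2) → ZMod (p ^ (m + 2))) :=
    { toFun := fun u j => (p : ZMod (p ^ (m + 2))) * u j
      map_zero' := by funext j; simp
      map_add' := fun u v => by funext j; simp [mul_add] }
  let ρ : (Fin (2 * k + 2) → ZMod (p ^ (m + 2))) →+ (Fin (2 * k + 2) → ZMod (p ^ m)) :=
    { toFun := fun u j => rho p m (u j)
      map_zero' := by funext j; simp
      map_add' := fun u v => by funext j; simp }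
  have hμ : Finset.univ.image μ = Finset.univ.filter
      fun w : Fin (2 * k + 2) → ZMod (p ^ (m + 1 + 1)) => ∀ j, red p (m + 1) (w j) = 0 := by
    ext w
    simp only [Finset.mem_image, Finset.mem_filter, Finset.mem_univ, true_and, red_eq_zero]
    constructor
    · rintro ⟨u, rfl⟩ j
      exact ⟨u j, rfl⟩
    · intro h
      choose u hu using h
      exact ⟨u, funext fun j => (hu j).symm⟩
  have hρ : Finset.univ.image ρ = Finset.univ := by
    ext w
    simp only [Finset.mem_image, Finset.mem_univ, true_and, iff_true]
    have : ∀ j, ∃ x, rho p m x = w j := fun j => ZMod.castHom_surjective _ _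
    choose u hu using this
    exact ⟨u, funext hu⟩
  have e1 := card_preimage μ (Finset.univ.filter fun v : Fin (2 * k + 2) → ZMod (p ^ (m + 1 + 1)) =>
    (∀ j, red p (m + 1) (v j) = 0) ∧ Bf Δ k v = ((p * t : ℤ) : ZMod (p ^ (m + 2))) ^ 2) (by
      rw [hμ]
      intro v hv
      simp only [Finset.mem_filter, Finset.mem_univ, true_and] at hv ⊢
      exact hv.1)
  have e2 := card_preimage ρ (Finset.univ.filter fun v : Fin (2 * k + 2) → ZMod (p ^ m) =>
    Bf Δ k v = (t : ZMod (p ^ m)) ^ 2) (by rw [hρ]; exact Finset.subset_univ _)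
  rw [hμ, card_pi p (m + 1) (fun _ => 0)] at e1
  rw [hρ] at e2
  have e3 : (Finset.univ.filter fun g => μ g ∈ (Finset.univ.filter
      fun v : Fin (2 * k + 2) → ZMod (p ^ (m + 1 + 1)) => (∀ j, red p (m + 1) (v j) = 0) ∧
        Bf Δ k v = ((p * t : ℤ) : ZMod (p ^ (m + 2))) ^ 2)) =
      (Finset.univ.filter fun g => ρ g ∈ (Finset.univ.filter
        fun v : Fin (2 * k + 2) → ZMod (p ^ m) => Bf Δ k v = (t : ZMod (p ^ m)) ^ 2)) := by
    ext u
    simp only [Finset.mem_filter, Finset.mem_univ, true_and]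
    have h1 : ∀ j, red p (m + 1) (μ u j) = 0 := fun j => (red_eq_zero p _ _).2 ⟨u j, rfl⟩
    have h2 : Bf Δ k (μ u) = (p : ZMod (p ^ (m + 2))) ^ 2 * Bf Δ k u := Bf_smul Δ k u _
    have h3 : Bf Δ k (ρ u) = rho p m (Bf Δ k u) := (Bf_map (rho p m) Δ k u).symm
    rw [h2, h3]
    simp only [h1, implies_true, true_and]
    have h4 := sq_mul_eq_zero p m (Bf Δ k u - (t : ZMod (p ^ (m + 2))) ^ 2)
    rw [map_sub, map_pow, map_intCast, sub_eq_zero] at h4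
    rw [← h4, mul_sub, sub_eq_zero]
    push_cast
    rw [mul_pow]
  rw [e3] at e1
  simp only [Finset.card_univ, Fintype.card_pi, ZMod.card, Finset.prod_const, Fintype.card_fin] at e1 e2
  change _ = II p Δ k (m + 1) (((p * t : ℤ) : ZMod (p ^ (m + 2))) ^ 2) * _ at e1
  change _ = NN p Δ k m ((t : ZMod (p ^ m)) ^ 2) * _ at e2
  have hpp : 0 < (p ^ (m + 2)) ^ (2 * k + 2) * (p ^ m) ^ (2 * k + 2) :=
    Nat.mul_pos (pow_pos (pow_pos hp.out.pos _) _) (pow_pos (pow_pos hp.out.pos _) _)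
  apply Nat.eq_of_mul_eq_mul_right hpp
  rw [← mul_assoc, ← e1, mul_right_comm, e2]
  rw [show p ^ ((m + 1) * (2 * k + 2)) = (p ^ m) ^ (2 * k + 2) * p ^ (2 * k + 2) by
    rw [add_mul, pow_add, pow_mul, one_mul]]
  ring

/-! the recursion for the densities -/

noncomputable def XX (Δ : ℤ) (k : ℕ) (t : ℤ) (ℓ : ℕ) : ℝ :=
  (NN p Δ k ℓ ((t : ZMod (p ^ ℓ)) ^ 2) : ℝ) / p ^ ((2 * k + 2) * ℓ)

theorem XX_zero (Δ : ℤ) (k : ℕ) (t : ℤ) : XX p Δ k t 0 = 1 := by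
  have hs : Subsingleton (ZMod (p ^ 0)) := by rw [pow_zero]; infer_instance
  have : NN p Δ k 0 ((t : ZMod (p ^ 0)) ^ 2) = 1 := by
    unfold NN
    rw [Finset.filter_true_of_mem (fun v _ => Subsingleton.elim _ _)]
    rw [Finset.card_univ, Fintype.card_eq_one_iff]
    exact ⟨0, fun y => Subsingleton.elim _ _⟩
  unfold XX
  rw [this]
  simp

theorem count_p (hp2 : p ≠ 2) (Δ : ℤ) (hD : (Δ : ZMod p) ≠ 0) (k : ℕ) (c : ZMod p) :
    ((Finset.univ.filter fun a : Fin (2 * k + 2) → ZMod p => Bf Δ k a = c).card : ℝ) =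
      (p : ℝ) ^ (2 * k + 1) + (quadraticChar (ZMod p) (Δ : ZMod p) : ℤ) *
        (if c = 0 then (p : ℝ) ^ (k + 1) - (p : ℝ) ^ k else - (p : ℝ) ^ k) := by
  have h := count_field (F := ZMod p) (by rwa [ZMod.ringChar_zmod_n]) Δ hD k c
  rw [Finset.sum_boole, ZMod.card] at h
  have h' := congrArg (fun x : ℤ => (x : ℝ)) h
  push_cast at h'
  rw [h']

theorem XX_unit (hp2 : p ≠ 2) (Δ : ℤ) (hD : (Δ : ZMod p) ≠ 0) (k : ℕ) (t : ℤ)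
    (ht : ¬ (p : ℤ) ∣ t) (m : ℕ) :
    XX p Δ k t (m + 1) = ((p : ℝ) ^ (2 * k + 1) -
      (quadraticChar (ZMod p) (Δ : ZMod p) : ℤ) * (p : ℝ) ^ k) / p ^ (2 * k + 2) * (1 / p) ^ m := by
  have ht' : (t : ZMod p) ≠ 0 := by rwa [Ne, ZMod.intCast_zmod_eq_zero_iff_dvd]
  have hr : red p m ((t : ZMod (p ^ (m + 1))) ^ 2) = (t : ZMod p) ^ 2 := by simp
  have hr0 : (t : ZMod p) ^ 2 ≠ 0 := pow_ne_zero 2 ht'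
  unfold XX
  rw [NN_split p hp2 Δ hD, II_of_ne p Δ k m _ (by rw [hr]; exact hr0), hr, add_zero]
  have h1 : (Finset.univ.filter fun a : Fin (2 * k + 2) → ZMod p =>
      a ≠ 0 ∧ Bf Δ k a = (t : ZMod p) ^ 2) =
      (Finset.univ.filter fun a : Fin (2 * k + 2) → ZMod p => Bf Δ k a = (t : ZMod p) ^ 2) := by
    ext a
    simp only [Finset.mem_filter, Finset.mem_univ, true_and, and_iff_right_iff_imp]
    rintro h rfl
    rw [Bf_zero] at h
    exact hr0 h.symm
  rw [h1]
  push_cast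
  rw [count_p p hp2 Δ hD, if_neg hr0, one_div_pow]
  have hp0 : (p : ℝ) ≠ 0 := by exact_mod_cast hp.out.ne_zero
  field_simp
  ring

theorem prim_zero (hp2 : p ≠ 2) (Δ : ℤ) (hD : (Δ : ZMod p) ≠ 0) (k : ℕ) :
    ((Finset.univ.filter fun a : Fin (2 * k + 2) → ZMod p => a ≠ 0 ∧ Bf Δ k a = 0).card : ℝ) =
      (p : ℝ) ^ (2 * k + 1) + (quadraticChar (ZMod p) (Δ : ZMod p) : ℤ) *
        ((p : ℝ) ^ (k + 1) - (p : ℝ) ^ k) - 1 := by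
  have h := count_p p hp2 Δ hD k 0
  rw [if_pos rfl] at h
  rw [← h]
  have : (Finset.univ.filter fun a : Fin (2 * k + 2) → ZMod p => a ≠ 0 ∧ Bf Δ k a = 0) =
    (Finset.univ.filter fun a : Fin (2 * k + 2) → ZMod p => Bf Δ k a = 0).erase 0 := by
    ext a
    simp
  rw [this, Finset.card_erase_of_mem (by simp [Bf_zero]), Nat.cast_sub, Nat.cast_one]
  rw [Nat.one_le_iff_ne_zero, ← Nat.pos_iff_ne_zero, Finset.card_pos]
  exact ⟨0, by simp [Bf_zero]⟩

theorem XX_one (hp2 : p ≠ 2) (Δ : ℤ) (hD : (Δ : ZMod p) ≠ 0) (k : ℕ) (t : ℤ) :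
    XX p Δ k (p * t) 1 = ((p : ℝ) ^ (2 * k + 1) + (quadraticChar (ZMod p) (Δ : ZMod p) : ℤ) *
        ((p : ℝ) ^ (k + 1) - (p : ℝ) ^ k)) / p ^ (2 * k + 2) := by
  have hr : red p 0 (((p * t : ℤ) : ZMod (p ^ (0 + 1))) ^ 2) = 0 := by simp
  unfold XX
  rw [NN_split p hp2 Δ hD k 0, II_one p Δ k _ hr, hr]
  push_cast
  rw [prim_zero p hp2 Δ hD]
  simp

theorem XX_succ (hp2 : p ≠ 2) (Δ : ℤ) (hD : (Δ : ZMod p) ≠ 0) (k : ℕ) (t : ℤ) (m : ℕ) :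
    XX p Δ k (p * t) (m + 2) = ((p : ℝ) ^ (2 * k + 1) +
      (quadraticChar (ZMod p) (Δ : ZMod p) : ℤ) * ((p : ℝ) ^ (k + 1) - (p : ℝ) ^ k) - 1) /
        p ^ (2 * k + 3) * (1 / p) ^ m + 1 / p ^ (2 * k + 2) * XX p Δ k t m := by
  have hr : red p (m + 1) (((p * t : ℤ) : ZMod (p ^ (m + 1 + 1))) ^ 2) = 0 := by simp
  unfold XX
  rw [NN_split p hp2 Δ hD k (m + 1), II_succ p Δ k m, hr]
  push_cast
  rw [prim_zero p hp2 Δ hD, one_div_pow]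
  have hp0 : (p : ℝ) ≠ 0 := by exact_mod_cast hp.out.ne_zero
  field_simp
  ring

theorem final (hp2 : p ≠ 2) (Δ : ℤ) (hD : (Δ : ZMod p) ≠ 0) (k : ℕ) (ε : ℝ)
    (hε : ε = (quadraticChar (ZMod p) (Δ : ZMod p) : ℤ)) (hε2 : ε ^ 2 = 1)
    (z : ℝ) (hz : |z| < 1) (w : ℝ) (hw : w = z / p ^ (k + 1)) (T : ℕ) (t : ℤ)
    (ht : ∃ s : ℤ, t = p ^ T * s ∧ ¬ (p : ℤ) ∣ s) :
    HasSum (fun ℓ => z ^ ℓ * XX p Δ k t ℓ)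
      ((1 - ε * w / p) * (1 - ε * w ^ (2 * T + 1)) / ((1 - z / p) * (1 - ε * w))) := by
  have hp1 : (1 : ℝ) < p := by exact_mod_cast hp.out.one_lt
  have hp0 : (p : ℝ) ≠ 0 := by positivity
  have hzp : |z / p| < 1 := by
    rw [abs_div, div_lt_one (by positivity), abs_of_pos (by positivity : (0 : ℝ) < p)]
    linarith
  have hz1 : 1 - z / p ≠ 0 := by
    have := (abs_lt.1 hzp).2
    linarith
  have hw1 : 1 - ε * w ≠ 0 := by
    have h1 : |w| < 1 := by
      rw [hw, abs_div, div_lt_one (by positivity), abs_of_pos (by positivity : (0 : ℝ) < p ^ (k + 1))]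
      exact hz.trans (one_lt_pow₀ hp1 (by omega))
    have h2 : |ε| = 1 := by
      rcases mul_self_eq_one_iff.1 ((sq ε).symm.trans hε2) with h | h <;> simp [h]
    have h3 : |ε * w| < 1 := by rwa [abs_mul, h2, one_mul]
    have := (abs_lt.1 h3).2
    linarith
  have hgeo := hasSum_geometric_of_abs_lt_one hzp
  have hzw : z = w * p ^ (k + 1) := by rw [hw]; field_simp
  induction T generalizing t with
  | zero =>
    obtain ⟨s, hs, hs'⟩ := ht
    rw [pow_zero, one_mul] at hs
    subst hs
    rw [← hasSum_nat_add_iff' 1]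
    have h := hgeo.mul_left (z * (((p : ℝ) ^ (2 * k + 1) - ε * (p : ℝ) ^ k) / p ^ (2 * k + 2)))
    convert h using 1
    · rfl
    · funext m
      rw [XX_unit p hp2 Δ hD k t hs' m, ← hε]
      simp only [div_pow, one_pow]
      ring
    · simp only [Finset.sum_range_one, XX_zero, pow_zero, mul_one, mul_zero, zero_add, pow_one]
      rw [mul_div_mul_right _ _ hw1, ← div_eq_mul_inv, eq_div_iff hz1, sub_mul, div_mul_cancel₀ _ hz1]
      rw [hw]
      field_simp
      ring
  | succ T ih =>
    obtain ⟨s, hs, hs'⟩ := ht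
    have hs2 : t = p * (p ^ T * s) := by rw [hs]; ring
    subst hs2
    have ih' := ih (p ^ T * s) ⟨s, rfl, hs'⟩
    rw [← hasSum_nat_add_iff' 2]
    have h := (hgeo.mul_left (z ^ 2 * (((p : ℝ) ^ (2 * k + 1) + ε * ((p : ℝ) ^ (k + 1) - (p : ℝ) ^ k) - 1) /
        p ^ (2 * k + 3)))).add (ih'.mul_left (w ^ 2))
    convert h using 1
    · rfl
    · funext m
      rw [XX_succ p hp2 Δ hD k _ m, ← hε, hw]
      simp only [div_pow, one_pow]
      field_simp
      ring
    · rw [Finset.sum_range_succ, Finset.sum_range_one, XX_zero, XX_one p hp2 Δ hD, ← hε]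
      have hd : (1 - ε * w / p) * (1 - ε * w ^ (2 * (T + 1) + 1)) / ((1 - z / p) * (1 - ε * w)) =
        w ^ 2 * ((1 - ε * w / p) * (1 - ε * w ^ (2 * T + 1)) / ((1 - z / p) * (1 - ε * w))) +
          (1 - ε * w / p) * (1 + ε * w) / (1 - z / p) := by
        rw [← mul_div_mul_right _ (1 - z / p) hw1, ← mul_div_assoc, ← add_div]
        congr 1
        have h1 : (1 + ε * w) * (1 - ε * w) = 1 - w ^ 2 := by linear_combination -w ^ 2 * hε2
        rw [mul_assoc (1 - ε * w / p) (1 + ε * w), h1]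
        ring
      rw [hd]
      have : (1 - ε * w / p) * (1 + ε * w) / (1 - z / p) -
          (z ^ 0 * 1 + z ^ 1 * (((p : ℝ) ^ (2 * k + 1) + ε * ((p : ℝ) ^ (k + 1) - (p : ℝ) ^ k)) /
            p ^ (2 * k + 2))) =
          z ^ 2 * (((p : ℝ) ^ (2 * k + 1) + ε * ((p : ℝ) ^ (k + 1) - (p : ℝ) ^ k) - 1) /
            p ^ (2 * k + 3)) * (1 - z / p)⁻¹ := by
        rw [← div_eq_mul_inv, eq_div_iff hz1, sub_mul, div_mul_cancel₀ _ hz1]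
        have h1 : (1 - ε * w / p) * (1 + ε * w) = 1 + ε * w - ε * w / p - w ^ 2 / p := by
          linear_combination -w ^ 2 / p * hε2
        rw [h1, hw]
        field_simp
        ring
      linear_combination this

end

open Classical in
theorem stmt_15 (p : ℕ) (hp : p.Prime) (hp2 : p ≠ 2) (Δ : ℤ) (hΔ : ¬ (p : ℤ) ∣ Δ)
    (ε : ℝ) (hε : ε = if IsSquare (Δ : ZMod p) then 1 else -1) (k : ℕ)
    (t : ℤ) (ht : t ≠ 0) (T : ℕ) (hT : padicValInt p t = T)
    (z : ℝ) (hz : |z| < 1) (w : ℝ) (hw : w = z / p ^ (k + 1)) :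
    HasSum
      (fun ℓ : ℕ => z ^ ℓ *
        ((Nat.card {v : Fin (2 * k + 2) → ZMod (p ^ ℓ) //
            v ⟨0, by omega⟩ ^ 2 - (Δ : ZMod (p ^ ℓ)) * v ⟨1, by omega⟩ ^ 2 +
              ∑ i : Fin k, v ⟨2 * i + 2, by have := i.isLt; omega⟩ *
                v ⟨2 * i + 3, by have := i.isLt; omega⟩
              = (t : ZMod (p ^ ℓ)) ^ 2} : ℝ) / p ^ ((2 * k + 2) * ℓ)))
      ((1 - ε * w / p) * (1 - ε * w ^ (2 * T + 1)) / ((1 - z / p) * (1 - ε * w))) := by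
  have : Fact p.Prime := ⟨hp⟩
  have hD : (Δ : ZMod p) ≠ 0 := by rwa [Ne, ZMod.intCast_zmod_eq_zero_iff_dvd]
  have hε1 : ε = (quadraticChar (ZMod p) (Δ : ZMod p) : ℤ) := by
    rw [hε, quadraticChar_apply, quadraticCharFun, if_neg hD]
    split_ifs <;> simp
  have hε2 : ε ^ 2 = 1 := by
    rw [hε]; split_ifs <;> norm_num
  have hts : ∃ s : ℤ, t = p ^ T * s ∧ ¬ (p : ℤ) ∣ s := by
    subst hT
    obtain ⟨s, hs⟩ := (padicValInt_dvd_iff (p := p) (padicValInt p t) t).2 (Or.inr le_rfl)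
    refine ⟨s, hs, ?_⟩
    rintro ⟨r, rfl⟩
    have : (p : ℤ) ^ (padicValInt p t + 1) ∣ t := ⟨r, by rw [pow_succ]; linear_combination hs⟩
    rcases (padicValInt_dvd_iff (p := p) (padicValInt p t + 1) t).1 this with h | h
    · exact ht h
    · omega
  have h := final p hp2 Δ hD k ε hε1 hε2 z hz w hw T t hts
  convert h using 2 with ℓ
  unfold XX NN
  rw [Nat.card_eq_fintype_card, Fintype.card_subtype]
  rfl
end

section
/- Let p be an odd prime, Δ an integer not divisible by p, set ε = 1 if the image of Δ in ℤ/pℤ is a square and ε = −1 otherwise, and let k be a natural number. Consider the quadratic form in n = 2k+1 variables B(x₀, x₁, …, x_{2k}) = Δ·x₀² + ∑_{i=1}^{k} x_{2i−1}·x_{2i}. For natural numbers T and ℓ, let N_{T,ℓ} be the number of v ∈ (ℤ/p^ℓℤ)^n with B(v) equal to the image of p^{2T} in ℤ/p^ℓℤ. Then for all real a, z with |a| < 1 and |z| < 1, setting w = z/p^{k+1} and u = z²/p^{2k+1}, the double series indexed by (T,ℓ) ∈ ℕ×ℕ with terms a^T · z^ℓ · N_{T,ℓ}/p^{nℓ}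 converges with sum (1 − w²)(1 − ε·a·w) / ((1 − z/p)(1 − a)(1 − ε·w)(1 − a·u)). -/
namespace S16

/-- Fibre counting for a surjective additive homomorphism of finite groups. -/
lemma fibre {A B : Type*} [AddGroup A] [AddGroup B] [Finite A] [Finite B] (f : A →+ B)
    (hf : Function.Surjective f) (P : B → Prop) :
    Nat.card {a // P (f a)} * Nat.card B = Nat.card A * Nat.card {b // P b} := by
  classical
  have e : A ≃ B × f.ker :=
    (AddSubgroup.addGroupEquivQuotientProdAddSubgroup (s := f.ker)).trans
      (Equiv.prodCongr (QuotientAddGroup.quotientKerEquivOfSurjective f hf).toEquiv (Equiv.refl _))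
  have hA : Nat.card A = Nat.card B * Nat.card f.ker := by
    rw [Nat.card_congr e, Nat.card_prod]
  have e1 : {a // P (f a)} ≃ {b // P b} × f.ker := by
    choose g hg using hf
    refine ⟨fun a => (⟨f a.1, a.2⟩, ⟨a.1 - g (f a.1), by simp [AddMonoidHom.mem_ker, hg]⟩),
      fun x => ⟨x.2.1 + g x.1.1, ?_⟩, ?_, ?_⟩
    · have := x.2.2
      rw [AddMonoidHom.mem_ker] at this
      rw [map_add, this, hg, zero_add]; exact x.1.2
    · intro a; simp
    · rintro ⟨⟨b, hb⟩, ⟨c, hc⟩⟩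
      rw [AddMonoidHom.mem_ker] at hc
      simp [hg, hc]
  rw [Nat.card_congr e1, Nat.card_prod, hA]; ring

/-- The space of vectors, split as one coordinate plus `k` hyperbolic pairs. -/
abbrev V (k : ℕ) (R : Type*) := R × (Fin k → R) × (Fin k → R)

/-- The quadratic form. -/
def Q {k : ℕ} {R : Type*} [CommRing R] (Δ : ℤ) (v : V k R) : R :=
  (Δ : R) * v.1 ^ 2 + ∑ i, v.2.1 i * v.2.2 i

/-- Its polar form. -/
def Bf {k : ℕ} {R : Type*} [CommRing R] (Δ : ℤ) (v : V k R) : V k R →+ R where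
  toFun d := 2 * (Δ : R) * v.1 * d.1 + ∑ i, (v.2.1 i * d.2.2 i + v.2.2 i * d.2.1 i)
  map_zero' := by simp
  map_add' x y := by
    simp only [Prod.fst_add, Prod.snd_add, Pi.add_apply, mul_add, Finset.sum_add_distrib]
    ring

lemma Bf_apply {k : ℕ} {R : Type*} [CommRing R] (Δ : ℤ) (v d : V k R) :
    Bf Δ v d = 2 * (Δ : R) * v.1 * d.1 + ∑ i, (v.2.1 i * d.2.2 i + v.2.2 i * d.2.1 i) := rfl

lemma Q_add {k : ℕ} {R : Type*} [CommRing R] (Δ : ℤ) (v d : V k R) :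
    Q Δ (v + d) = Q Δ v + Bf Δ v d + Q Δ d := by
  simp only [Q, Bf_apply, Prod.fst_add, Prod.snd_add, Pi.add_apply, add_mul, mul_add,
    Finset.sum_add_distrib]
  have : ∑ i, d.2.1 i * v.2.2 i = ∑ i, v.2.2 i * d.2.1 i :=
    Finset.sum_congr rfl fun i _ => mul_comm _ _
  rw [this]; ring

lemma Q_smul {k : ℕ} {R : Type*} [CommRing R] (Δ : ℤ) (c : R) (v : V k R) :
    Q Δ (c • v) = c ^ 2 * Q Δ v := by
  simp only [Q, Prod.smul_fst, Prod.smul_snd, Pi.smul_apply, smul_eq_mul, mul_add, Finset.mul_sum]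
  congr 1
  · ring
  · exact Finset.sum_congr rfl fun i _ => by ring

lemma Bf_smul {k : ℕ} {R : Type*} [CommRing R] (Δ : ℤ) (c : R) (v d : V k R) :
    Bf Δ v (c • d) = c * Bf Δ v d := by
  simp only [Bf_apply, Prod.smul_fst, Prod.smul_snd, Pi.smul_apply, smul_eq_mul, mul_add,
    Finset.mul_sum, Finset.sum_add_distrib]
  congr 1
  · ring
  · congr 1 <;> exact Finset.sum_congr rfl fun i _ => by ring

/-- Coordinatewise base change. -/
def vm {R S : Type*} [CommRing R] [CommRing S] (k : ℕ) (φ : R →+* S) : V k R →+ V k S where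
  toFun v := (φ v.1, fun i => φ (v.2.1 i), fun i => φ (v.2.2 i))
  map_zero' := by ext <;> simp
  map_add' x y := by ext <;> simp

lemma vm_apply {R S : Type*} [CommRing R] [CommRing S] (k : ℕ) (φ : R →+* S) (v : V k R) :
    vm k φ v = (φ v.1, fun i => φ (v.2.1 i), fun i => φ (v.2.2 i)) := rfl

lemma Q_vm {R S : Type*} [CommRing R] [CommRing S] (k : ℕ) (φ : R →+* S) (Δ : ℤ) (v : V k R) :
    Q Δ (vm k φ v) = φ (Q Δ v) := by
  simp [Q, vm_apply]

lemma vm_surj {R S : Type*} [CommRing R] [CommRing S] (k : ℕ) (φ : R →+* S)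
    (h : Function.Surjective φ) : Function.Surjective (vm k φ) := by
  intro v
  choose g hg using h
  exact ⟨(g v.1, fun i => g (v.2.1 i), fun i => g (v.2.2 i)), by simp [vm_apply, hg]⟩

lemma card_V (k : ℕ) (R : Type*) [Finite R] : Nat.card (V k R) = Nat.card R ^ (2 * k + 1) := by
  simp only [Nat.card_prod, Nat.card_fun, Nat.card_fin]
  ring

/-- Reduction homomorphism `ℤ/p^(m+j) → ℤ/p^m`. -/
abbrev red (p m j : ℕ) : ZMod (p ^ (m + j)) →+* ZMod (p ^ m) :=
  ZMod.castHom (pow_dvd_pow p (Nat.le_add_right m j)) _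

/-- Reduction homomorphism `ℤ/p^(m+1) → ℤ/p`. -/
abbrev rho (p m : ℕ) : ZMod (p ^ (m + 1)) →+* ZMod p :=
  ZMod.castHom (dvd_pow_self p (Nat.succ_ne_zero m)) _

lemma cast_ker {a b : ℕ} (hb : b ≠ 0) (h : a ∣ b) (x : ZMod b) :
    ZMod.castHom h (ZMod a) x = 0 ↔ ∃ c, x = (a : ZMod b) * c := by
  have : NeZero b := ⟨hb⟩
  constructor
  · intro hx
    rw [← ZMod.natCast_zmod_val x, map_natCast, ZMod.natCast_eq_zero_iff] at hx
    obtain ⟨c, hc⟩ := hx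
    exact ⟨c, by rw [← ZMod.natCast_zmod_val x, hc]; push_cast; rfl⟩
  · rintro ⟨c, rfl⟩
    rw [map_mul, map_natCast, ZMod.natCast_self, zero_mul]

lemma mul_eq_zero_red {a b c : ℕ} (hc : c ≠ 0) (h : c = a * b) (hd : b ∣ c) (x : ZMod c) :
    ((a : ZMod c) * x = 0) ↔ ZMod.castHom hd (ZMod b) x = 0 := by
  have : NeZero c := ⟨hc⟩
  have ha : a ≠ 0 := by rintro rfl; simp [h] at hc
  rw [← ZMod.natCast_zmod_val x, map_natCast, ← Nat.cast_mul, ZMod.natCast_eq_zero_iff,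
    ZMod.natCast_eq_zero_iff]
  generalize x.val = y
  rw [h]
  exact Nat.mul_dvd_mul_iff_left (Nat.pos_of_ne_zero ha)

lemma isUnit_of_rho {p : ℕ} (hp : p.Prime) (m : ℕ) (x : ZMod (p ^ (m + 1)))
    (hx : rho p m x ≠ 0) : IsUnit x := by
  have : NeZero (p ^ (m + 1)) := ⟨pow_ne_zero _ hp.ne_zero⟩
  rw [← ZMod.natCast_zmod_val x, map_natCast, Ne, ZMod.natCast_eq_zero_iff] at hx
  rw [← ZMod.natCast_zmod_val x, ZMod.isUnit_iff_coprime]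
  exact Nat.Coprime.pow_right _ ((Nat.Prime.coprime_iff_not_dvd hp).2 hx).symm

lemma Bf_surj {p : ℕ} (hp : p.Prime) (hp2 : p ≠ 2) (Δ : ℤ) (hΔ : ¬ (p : ℤ) ∣ Δ) (k m : ℕ)
    (v : V k (ZMod (p ^ (m + 1)))) (hv : vm k (rho p m) v ≠ 0) :
    Function.Surjective (Bf Δ v) := by
  have : Fact p.Prime := ⟨hp⟩
  intro c
  by_cases h0 : rho p m v.1 = 0
  · by_cases h1 : ∀ i, rho p m (v.2.1 i) = 0
    · by_cases h2 : ∀ i, rho p m (v.2.2 i) = 0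
      · exact absurd (by rw [vm_apply]; ext <;> simp only [h0, h1, h2] <;> rfl) hv
      · push Not at h2
        obtain ⟨i, hi⟩ := h2
        obtain ⟨r, hr⟩ := (isUnit_of_rho hp m _ hi).exists_right_inv
        refine ⟨(0, Pi.single i (r * c), 0), ?_⟩
        simp [Bf_apply, Pi.single_apply, ← mul_assoc, hr]
    · push Not at h1
      obtain ⟨i, hi⟩ := h1
      obtain ⟨r, hr⟩ := (isUnit_of_rho hp m _ hi).exists_right_inv
      refine ⟨(0, 0, Pi.single i (r * c)), ?_⟩
      simp [Bf_apply, Pi.single_apply, ← mul_assoc, hr]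
  · have hu : rho p m (2 * Δ * v.1) ≠ 0 := by
      rw [map_mul, map_mul, map_intCast, map_ofNat]
      refine mul_ne_zero (mul_ne_zero ?_ ?_) h0
      · have : ((2 : ℕ) : ZMod p) ≠ 0 := by
          rw [Ne, ZMod.natCast_eq_zero_iff, Nat.prime_dvd_prime_iff_eq hp Nat.prime_two]
          exact hp2
        exact_mod_cast this
      · rwa [Ne, ZMod.intCast_zmod_eq_zero_iff_dvd]
    obtain ⟨r, hr⟩ := (isUnit_of_rho hp m _ hu).exists_right_inv
    refine ⟨(r * c, 0, 0), ?_⟩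
    simp only [Bf_apply]
    simp [← mul_assoc, hr]

/-- Number of primitive solutions modulo `p^(m+1)`. -/
noncomputable def Pn (p : ℕ) (Δ : ℤ) (k m : ℕ) (t : ℤ) : ℕ :=
  Nat.card {v : V k (ZMod (p ^ (m + 1))) // vm k (rho p m) v ≠ 0 ∧ Q Δ v = t}

/-- Number of nonzero solutions modulo `p`. -/
noncomputable def P0 (p : ℕ) (Δ : ℤ) (k : ℕ) (t : ℤ) : ℕ :=
  Nat.card {v : V k (ZMod p) // v ≠ 0 ∧ Q Δ v = t}

lemma Pn_zero {p : ℕ} (hp : p.Prime) (Δ : ℤ) (k : ℕ) (t : ℤ) : Pn p Δ k 0 t = P0 p Δ k t := by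
  have : NeZero p := ⟨hp.ne_zero⟩
  have : NeZero (p ^ (0 + 1)) := ⟨pow_ne_zero _ hp.ne_zero⟩
  have hb : Function.Bijective (rho p 0) := by
    rw [Nat.bijective_iff_surjective_and_card]
    exact ⟨ZMod.castHom_surjective _, by simp⟩
  have h := fibre (vm k (rho p 0)) (vm_surj k _ hb.2) (fun v => v ≠ 0 ∧ Q Δ v = t)
  rw [card_V, card_V, Nat.card_zmod, Nat.card_zmod, show (p ^ (0 + 1)) ^ (2 * k + 1) = p ^ (2 * k + 1) by simp,
    mul_comm] at h
  have h2 := Nat.eq_of_mul_eq_mul_left (pow_pos hp.pos _) h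
  rw [P0, ← h2, Pn]
  refine Nat.card_congr (Equiv.subtypeEquivRight fun v => ?_)
  rw [Q_vm, ← map_intCast (rho p 0), hb.1.eq_iff]

lemma rho_red (p m : ℕ) (x : ZMod (p ^ (m + 1 + 1))) :
    rho p m (red p (m + 1) 1 x) = rho p (m + 1) x := by
  rw [← RingHom.comp_apply]
  congr 1
  exact Subsingleton.elim _ _

lemma vm_rho_red (p k m : ℕ) (v : V k (ZMod (p ^ (m + 1 + 1)))) :
    vm k (rho p m) (vm k (red p (m + 1) 1) v) = vm k (rho p (m + 1)) v := by
  simp only [vm_apply, rho_red]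

lemma smul_prim (p k m : ℕ) (v : V k (ZMod (p ^ (m + 1)))) (c : ZMod (p ^ (m + 1)))
    (hc : rho p m c = 0) : vm k (rho p m) (c • v) = 0 := by
  rw [vm_apply]
  ext <;> simp only [Prod.smul_fst, Prod.smul_snd, Pi.smul_apply, smul_eq_mul, map_mul, hc,
    zero_mul] <;> rfl

lemma hensel_fibre {p : ℕ} (hp : p.Prime) (hp2 : p ≠ 2) (Δ : ℤ) (hΔ : ¬ (p : ℤ) ∣ Δ) (k m : ℕ)
    (v : V k (ZMod (p ^ (m + 1 + 1)))) (hv : vm k (rho p (m + 1)) v ≠ 0)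
    (s : ZMod (p ^ (m + 1 + 1))) (hs : red p (m + 1) 1 s = 0) :
    Nat.card {d : V k (ZMod (p ^ (m + 1 + 1))) //
      ((p ^ (m + 1) : ℕ) : ZMod (p ^ (m + 1 + 1))) * Bf Δ v d = s} * p
      = Nat.card (V k (ZMod (p ^ (m + 1 + 1)))) := by
  have : NeZero (p ^ (m + 1 + 1)) := ⟨pow_ne_zero _ hp.ne_zero⟩
  have : NeZero (p ^ (m + 1)) := ⟨pow_ne_zero _ hp.ne_zero⟩
  set K := (red p (m + 1) 1).toAddMonoidHom.ker with hK
  have hmem : ∀ x, x ∈ K ↔ red p (m + 1) 1 x = 0 := fun x => Iff.rfl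
  let f : V k (ZMod (p ^ (m + 1 + 1))) →+ K :=
    AddMonoidHom.codRestrict
      ((AddMonoidHom.mulLeft ((p ^ (m + 1) : ℕ) : ZMod (p ^ (m + 1 + 1)))).comp (Bf Δ v)) K
      (fun d => by
        rw [hmem]
        exact (cast_ker (pow_ne_zero _ hp.ne_zero) _ _).2 ⟨Bf Δ v d, rfl⟩)
  have hf : Function.Surjective f := by
    rintro ⟨x, hx⟩
    rw [hmem] at hx
    obtain ⟨c, rfl⟩ := (cast_ker (pow_ne_zero _ hp.ne_zero) (pow_dvd_pow p (by omega)) _).1 hx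
    obtain ⟨d, rfl⟩ := Bf_surj hp hp2 Δ hΔ k (m + 1) v hv c
    exact ⟨d, Subtype.ext rfl⟩
  have hcK : Nat.card K = p := by
    have h := fibre (red p (m + 1) 1).toAddMonoidHom
      (show Function.Surjective (red p (m + 1) 1) from ZMod.castHom_surjective _) (fun x => x = 0)
    have h1 : Nat.card K * p ^ (m + 1) = p ^ (m + 1 + 1) * 1 := by
      rw [Nat.card_zmod, Nat.card_zmod] at h
      have h0 : Nat.card {b : ZMod (p ^ (m + 1)) // b = 0} = 1 := by simp
      rw [h0] at h
      exact h
    apply Nat.eq_of_mul_eq_mul_right (pow_pos hp.pos (m + 1))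
    rw [h1]; ring
  have h := fibre f hf (fun x => x = ⟨s, hs⟩)
  rw [hcK] at h
  have h1 : Nat.card {b : K // b = ⟨s, hs⟩} = 1 := by simp
  rw [h1, mul_one] at h
  rw [← h]
  congr 1
  refine Nat.card_congr (Equiv.subtypeEquivRight fun d => ?_)
  rw [Subtype.ext_iff]
  rfl

lemma Pn_succ {p : ℕ} (hp : p.Prime) (hp2 : p ≠ 2) (Δ : ℤ) (hΔ : ¬ (p : ℤ) ∣ Δ) (k m : ℕ)
    (t : ℤ) : Pn p Δ k (m + 1) t = p ^ (2 * k) * Pn p Δ k m t := by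
  classical
  have : NeZero (p ^ (m + 1 + 1)) := ⟨pow_ne_zero _ hp.ne_zero⟩
  have : NeZero (p ^ (m + 1)) := ⟨pow_ne_zero _ hp.ne_zero⟩
  set R := ZMod (p ^ (m + 1 + 1)) with hR
  set c : R := ((p ^ (m + 1) : ℕ) : R) with hc
  have hcred : red p (m + 1) 1 c = 0 := (cast_ker (pow_ne_zero _ hp.ne_zero) _ _).2 ⟨1, by simp [hc]⟩
  have hcrho : rho p (m + 1) c = 0 := by rw [← rho_red, hcred, map_zero]
  have hcc : c ^ 2 = 0 := by
    rw [hc, ← Nat.cast_pow, ZMod.natCast_eq_zero_iff, ← pow_mul]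
    exact pow_dvd_pow _ (by omega)
  have hVpos : 0 < Nat.card (V k R) := Nat.card_pos
  -- first count
  let f : V k R × V k R →+ V k R :=
    AddMonoidHom.coprod (AddMonoidHom.id _) (DistribSMul.toAddMonoidHom (V k R) c)
  have hfa : ∀ x, f x = x.1 + c • x.2 := fun x => rfl
  have hf : Function.Surjective f := fun v => ⟨(v, 0), by rw [hfa]; simp⟩
  have h1 := fibre f hf (fun v => vm k (rho p (m + 1)) v ≠ 0 ∧ Q Δ v = t)
  rw [Nat.card_prod (V k R) (V k R)] at h1
  have h1' : Nat.card {x // vm k (rho p (m + 1)) (f x) ≠ 0 ∧ Q Δ (f x) = t}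
      = Nat.card (V k R) * Pn p Δ k (m + 1) t := by
    apply Nat.eq_of_mul_eq_mul_right hVpos
    rw [h1, Pn]; ring
  -- second count
  have h2 : Nat.card {x // vm k (rho p (m + 1)) (f x) ≠ 0 ∧ Q Δ (f x) = t} * p
      = Nat.card {v : V k R // vm k (rho p m) (vm k (red p (m + 1) 1) v) ≠ 0 ∧
          Q Δ (vm k (red p (m + 1) 1) v) = t} * Nat.card (V k R) := by
    have e := Equiv.subtypeProdEquivSigmaSubtype
      (fun (v d : V k R) => vm k (rho p (m + 1)) (f (v, d)) ≠ 0 ∧ Q Δ (f (v, d)) = t)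
    rw [Nat.card_congr e, Nat.card_sigma, Finset.sum_mul]
    have key : ∀ v : V k R, Nat.card {d : V k R // vm k (rho p (m + 1)) (f (v, d)) ≠ 0 ∧
        Q Δ (f (v, d)) = t} * p = if (vm k (rho p m) (vm k (red p (m + 1) 1) v) ≠ 0 ∧
          Q Δ (vm k (red p (m + 1) 1) v) = t) then Nat.card (V k R) else 0 := by
      intro v
      have hiff : ∀ d : V k R, (vm k (rho p (m + 1)) (f (v, d)) ≠ 0 ∧ Q Δ (f (v, d)) = t) ↔
          (vm k (rho p (m + 1)) v ≠ 0 ∧ c * Bf Δ v d = t - Q Δ v) := by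
        intro d
        rw [hfa, map_add, smul_prim p k (m + 1) d c hcrho, add_zero, Q_add, Q_smul, Bf_smul, hcc,
          zero_mul, add_zero, eq_sub_iff_add_eq']
      rw [vm_rho_red, Q_vm]
      rw [Nat.card_congr (Equiv.subtypeEquivRight hiff)]
      split_ifs with hg
      · rw [← hensel_fibre hp hp2 Δ hΔ k m v hg.1 (t - Q Δ v) (by
          rw [map_sub, map_intCast, hg.2, sub_self])]
        congr 1
        exact Nat.card_congr (Equiv.subtypeEquivRight fun d => and_iff_right hg.1)
      · have : IsEmpty {d : V k R // vm k (rho p (m + 1)) v ≠ 0 ∧ c * Bf Δ v d = t - Q Δ v} := by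
          refine ⟨fun d => hg ⟨d.2.1, ?_⟩⟩
          have h := congrArg (red p (m + 1) 1) d.2.2
          rw [map_mul, hcred, zero_mul, map_sub, map_intCast] at h
          exact (sub_eq_zero.1 h.symm).symm
        rw [Nat.card_of_isEmpty, zero_mul]
    rw [Finset.sum_congr rfl fun v _ => key v, ← Finset.sum_filter, Finset.sum_const, smul_eq_mul,
      Nat.card_eq_fintype_card (α := {v : V k R // _}), Fintype.card_subtype]
  have h3 := fibre (vm k (red p (m + 1) 1)) (vm_surj k _ (ZMod.castHom_surjective _))
    (fun v => vm k (rho p m) v ≠ 0 ∧ Q Δ v = t)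
  rw [h1'] at h2
  have h2' : Pn p Δ k (m + 1) t * p = Nat.card {v : V k R //
      vm k (rho p m) (vm k (red p (m + 1) 1) v) ≠ 0 ∧
          Q Δ (vm k (red p (m + 1) 1) v) = t} := by
    apply Nat.eq_of_mul_eq_mul_right hVpos
    rw [← h2]; ring
  rw [← h2', card_V, card_V, Nat.card_zmod, Nat.card_zmod] at h3
  apply Nat.eq_of_mul_eq_mul_right (Nat.mul_pos hp.pos (pow_pos (pow_pos hp.pos (m + 1)) (2 * k + 1)))
  rw [← mul_assoc, h3, Pn, pow_succ p (m + 1)]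
  ring

lemma Pn_eq {p : ℕ} (hp : p.Prime) (hp2 : p ≠ 2) (Δ : ℤ) (hΔ : ¬ (p : ℤ) ∣ Δ) (k m : ℕ)
    (t : ℤ) : Pn p Δ k m t = p ^ (2 * k * m) * P0 p Δ k t := by
  induction m with
  | zero => simp [Pn_zero hp]
  | succ m ih => rw [Pn_succ hp hp2 Δ hΔ, ih]; ring

/-- Number of all solutions modulo `p^l`. -/
noncomputable def N (p : ℕ) (Δ : ℤ) (k T l : ℕ) : ℕ :=
  Nat.card {v : V k (ZMod (p ^ l)) // Q Δ v = (((p ^ (2 * T) : ℕ) : ℤ) : ZMod (p ^ l))}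

/-- Number of imprimitive solutions modulo `p^(l+1)`. -/
noncomputable def Nn (p : ℕ) (Δ : ℤ) (k T l : ℕ) : ℕ :=
  Nat.card {v : V k (ZMod (p ^ (l + 1))) // vm k (rho p l) v = 0 ∧
    Q Δ v = (((p ^ (2 * T) : ℕ) : ℤ) : ZMod (p ^ (l + 1)))}

lemma N_zero (p : ℕ) (Δ : ℤ) (k T : ℕ) : N p Δ k T 0 = 1 := by
  have : Subsingleton (ZMod (p ^ 0)) := by rw [pow_zero]; exact inferInstanceAs (Subsingleton (Fin 1))
  rw [N, Nat.card_eq_one_iff_unique]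
  exact ⟨inferInstance, ⟨⟨0, Subsingleton.elim _ _⟩⟩⟩

lemma N_succ {p : ℕ} (hp : p.Prime) (Δ : ℤ) (k T l : ℕ) :
    N p Δ k T (l + 1) = Pn p Δ k l ((p ^ (2 * T) : ℕ) : ℤ) + Nn p Δ k T l := by
  classical
  have : NeZero (p ^ (l + 1)) := ⟨pow_ne_zero _ hp.ne_zero⟩
  simp only [N, Pn, Nn, Nat.card_eq_fintype_card, Fintype.card_subtype]
  rw [← Finset.card_filter_add_card_filter_not (fun v => vm k (rho p l) v ≠ 0),
    Finset.filter_filter, Finset.filter_filter]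
  simp only [not_not, and_comm]

lemma Nn_zero_left {p : ℕ} (hp : p.Prime) (Δ : ℤ) (k l : ℕ) : Nn p Δ k 0 l = 0 := by
  have : Fact p.Prime := ⟨hp⟩
  rw [Nn]
  have : IsEmpty {v : V k (ZMod (p ^ (l + 1))) // vm k (rho p l) v = 0 ∧
    Q Δ v = (((p ^ (2 * 0) : ℕ) : ℤ) : ZMod (p ^ (l + 1)))} := by
    refine ⟨fun v => ?_⟩
    have h := Q_vm k (rho p l) Δ v.1
    rw [v.2.1, v.2.2] at h
    simp [Q] at h
  exact Nat.card_of_isEmpty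

lemma Nn_one {p : ℕ} (hp : p.Prime) (Δ : ℤ) (k T : ℕ) : Nn p Δ k (T + 1) 0 = 1 := by
  have : NeZero (p ^ (0 + 1)) := ⟨pow_ne_zero _ hp.ne_zero⟩
  have : NeZero p := ⟨hp.ne_zero⟩
  have hb : Function.Bijective (rho p 0) := by
    rw [Nat.bijective_iff_surjective_and_card]
    exact ⟨ZMod.castHom_surjective _, by simp⟩
  have hz : (((p ^ (2 * (T + 1)) : ℕ) : ℤ) : ZMod (p ^ (0 + 1))) = 0 := by
    rw [Int.cast_natCast, ZMod.natCast_eq_zero_iff]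
    exact pow_dvd_pow _ (by omega)
  rw [Nn, Nat.card_eq_one_iff_unique]
  refine ⟨⟨fun x y => ?_⟩, ⟨⟨0, map_zero _, by rw [hz]; simp [Q]⟩⟩⟩
  have hinj : Function.Injective (vm k (rho p 0)) := by
    intro a b h
    simp only [vm_apply, Prod.mk.injEq] at h
    obtain ⟨h1, h2, h3⟩ := h
    ext i
    · exact hb.1 h1
    · exact hb.1 (congrFun h2 i)
    · exact hb.1 (congrFun h3 i)
  exact Subtype.ext (hinj (x.2.1.trans y.2.1.symm))

lemma Nn_succ {p : ℕ} (hp : p.Prime) (Δ : ℤ) (k T l : ℕ) :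
    Nn p Δ k (T + 1) (l + 1) = p ^ (2 * k + 1) * N p Δ k T l := by
  have : NeZero (p ^ (l + 1 + 1)) := ⟨pow_ne_zero _ hp.ne_zero⟩
  have : NeZero (p ^ l) := ⟨pow_ne_zero _ hp.ne_zero⟩
  have : NeZero p := ⟨hp.ne_zero⟩
  set R := ZMod (p ^ (l + 1 + 1)) with hR
  set K := (vm k (rho p (l + 1))).ker with hK
  have hmem : ∀ x, x ∈ K ↔ vm k (rho p (l + 1)) x = 0 := fun x => Iff.rfl
  let f : V k R →+ K :=
    AddMonoidHom.codRestrict (DistribSMul.toAddMonoidHom (V k R) (p : R)) K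
      (fun d => by
        rw [hmem]
        exact smul_prim p k (l + 1) d _ (by rw [map_natCast, ZMod.natCast_self]))
  have hf : Function.Surjective f := by
    rintro ⟨x, hx⟩
    rw [hmem, vm_apply] at hx
    have h1 : rho p (l + 1) x.1 = 0 := congrArg Prod.fst hx
    have h2 : ∀ i, rho p (l + 1) (x.2.1 i) = 0 := fun i => congrFun (congrArg (fun y => y.2.1) hx) i
    have h3 : ∀ i, rho p (l + 1) (x.2.2 i) = 0 := fun i => congrFun (congrArg (fun y => y.2.2) hx) i
    simp only [cast_ker (pow_ne_zero _ hp.ne_zero)] at h1 h2 h3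
    obtain ⟨c1, h1⟩ := h1
    choose c2 h2 using h2
    choose c3 h3 using h3
    refine ⟨(c1, c2, c3), Subtype.ext ?_⟩
    change (p : R) • ((c1, c2, c3) : V k R) = x
    ext i
    · simp [h1]
    · simp [h2]
    · simp [h3]
  have hcK : Nat.card K * p ^ (2 * k + 1) = Nat.card (V k R) := by
    have h := fibre (vm k (rho p (l + 1))) (vm_surj k _ (ZMod.castHom_surjective _)) (fun x => x = 0)
    rw [card_V k (ZMod p), Nat.card_zmod] at h
    have h1 : Nat.card {b : V k (ZMod p) // b = 0} = 1 := by simp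
    rw [h1, mul_one] at h
    exact h
  have h1 := fibre f hf (fun x => Q Δ x.1 = (((p ^ (2 * (T + 1)) : ℕ) : ℤ) : R))
  have h2 : Nat.card {b : K // Q Δ b.1 = (((p ^ (2 * (T + 1)) : ℕ) : ℤ) : R)}
      = Nn p Δ k (T + 1) (l + 1) :=
    Nat.card_congr (Equiv.subtypeSubtypeEquivSubtypeInter (fun x => x ∈ K)
      (fun x => Q Δ x = (((p ^ (2 * (T + 1)) : ℕ) : ℤ) : R)))
  have h3 := fibre (vm k (red p l 2)) (vm_surj k _ (ZMod.castHom_surjective _))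
    (fun v => Q Δ v = (((p ^ (2 * T) : ℕ) : ℤ) : ZMod (p ^ l)))
  have h4 : Nat.card {a // Q Δ (f a).1 = (((p ^ (2 * (T + 1)) : ℕ) : ℤ) : R)}
      = Nat.card {v // Q Δ (vm k (red p l 2) v) = (((p ^ (2 * T) : ℕ) : ℤ) : ZMod (p ^ l))} := by
    refine Nat.card_congr (Equiv.subtypeEquivRight fun v => ?_)
    change Q Δ ((p : R) • v) = _ ↔ _
    rw [Q_smul, Q_vm, ← sub_eq_zero, ← sub_eq_zero (a := red p l 2 (Q Δ v)),
      ← map_intCast (red p l 2), ← map_sub,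
      ← mul_eq_zero_red (a := p ^ 2) (pow_ne_zero _ hp.ne_zero) (by ring)]
    have : (p : R) ^ 2 * Q Δ v - (((p ^ (2 * (T + 1)) : ℕ) : ℤ) : R)
      = ((p ^ 2 : ℕ) : R) * (Q Δ v - (((p ^ (2 * T) : ℕ) : ℤ) : R)) := by
      push_cast; ring
    rw [this]
  have h5 : Nat.card {v // Q Δ (vm k (red p l 2) v) = (((p ^ (2 * T) : ℕ) : ℤ) : ZMod (p ^ l))}
      = p ^ (2 * k + 1) * p ^ (2 * k + 1) * N p Δ k T l := by
    rw [card_V, card_V, Nat.card_zmod, Nat.card_zmod] at h3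
    apply Nat.eq_of_mul_eq_mul_right (pow_pos (pow_pos hp.pos l) (2 * k + 1))
    rw [h3, N, pow_add p l 2]; ring
  rw [h4, h5, h2, ← hcK] at h1
  have hKpos : 0 < Nat.card K := Nat.card_pos
  apply Nat.eq_of_mul_eq_mul_left (Nat.mul_pos hKpos (pow_pos hp.pos (2 * k + 1)))
  rw [← h1]; ring

lemma dot_fibre {p : ℕ} (hp : p.Prime) (k : ℕ) (x : Fin k → ZMod p) (hx : x ≠ 0) (s : ZMod p) :
    Nat.card {y : Fin k → ZMod p // ∑ i, x i * y i = s} * p = p ^ k := by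
  have : Fact p.Prime := ⟨hp⟩
  let f : (Fin k → ZMod p) →+ ZMod p :=
    { toFun := fun y => ∑ i, x i * y i
      map_zero' := by simp
      map_add' := fun a b => by simp [mul_add, Finset.sum_add_distrib] }
  have hf : Function.Surjective f := by
    intro c
    obtain ⟨i, hi⟩ := Function.ne_iff.1 hx
    refine ⟨Pi.single i ((x i)⁻¹ * c), ?_⟩
    change ∑ j, x j * (Pi.single i ((x i)⁻¹ * c) : Fin k → ZMod p) j = c
    simp only [Pi.zero_apply] at hi
    simp [Pi.single_apply, ← mul_assoc, mul_inv_cancel₀ hi]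
  have h := fibre f hf (fun y => y = s)
  have h1 : Nat.card {b : ZMod p // b = s} = 1 := by simp
  have h2 : Nat.card (Fin k → ZMod p) = p ^ k := by simp
  rw [h1, mul_one, Nat.card_zmod, h2] at h
  exact h

lemma total {p : ℕ} (hp : p.Prime) (Δ : ℤ) (k : ℕ) (t : ZMod p) :
    (Nat.card {v : V k (ZMod p) // Q Δ v = t} : ℤ)
      = p ^ (2 * k) - p ^ k + p ^ k * Nat.card {x : ZMod p // (Δ : ZMod p) * x ^ 2 = t} := by
  classical
  have : Fact p.Prime := ⟨hp⟩
  have hp0 : (p : ℤ) ≠ 0 := by exact_mod_cast hp.ne_zero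
  let e1 : {v : V k (ZMod p) // Q Δ v = t} ≃
      {w : (ZMod p × (Fin k → ZMod p)) × (Fin k → ZMod p) //
        Q Δ (w.1.1, w.1.2, w.2) = t} :=
    (Equiv.prodAssoc _ _ _).symm.subtypeEquiv (fun v => Iff.rfl)
  have e2 := Equiv.subtypeProdEquivSigmaSubtype
      (fun (w : ZMod p × (Fin k → ZMod p)) (y : Fin k → ZMod p) => Q Δ (w.1, w.2, y) = t)
  have key : ∀ x0 : ZMod p, ∀ x : Fin k → ZMod p,
      (Nat.card {y : Fin k → ZMod p // Q Δ (x0, x, y) = t} : ℤ) * p =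
      if x = 0 then (if (Δ : ZMod p) * x0 ^ 2 = t then (p : ℤ) ^ k * p else 0) else p ^ k := by
    intro x0 x
    split_ifs with h1 h2
    · have : ∀ y : Fin k → ZMod p, Q Δ (x0, x, y) = t := fun y => by simp [Q, h1, h2]
      rw [Nat.card_congr (Equiv.subtypeUnivEquiv this)]
      simp
    · have : IsEmpty {y : Fin k → ZMod p // Q Δ (x0, x, y) = t} :=
        ⟨fun y => h2 (by simpa [Q, h1] using y.2)⟩
      simp
    · rw [← Nat.cast_pow, ← dot_fibre hp k x h1 (t - Δ * x0 ^ 2)]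
      push_cast
      congr 2
      exact Nat.card_congr (Equiv.subtypeEquivRight fun y => by
        simp only [Q]; rw [eq_sub_iff_add_eq'])
  have hs : (Nat.card {x : ZMod p // (Δ : ZMod p) * x ^ 2 = t} : ℤ)
      = ∑ x : ZMod p, if (Δ : ZMod p) * x ^ 2 = t then (1 : ℤ) else 0 := by
    rw [Nat.card_eq_fintype_card, Fintype.card_subtype]
    simp
  apply mul_right_cancel₀ hp0
  rw [Nat.card_congr e1, Nat.card_congr e2, Nat.card_sigma]
  push_cast
  rw [Finset.sum_mul, Fintype.sum_prod_type]
  simp only [key]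
  have inner : ∀ A B : ℤ, ∑ x : Fin k → ZMod p, (if x = 0 then A else B) = A + (p ^ k - 1) * B := by
    intro A B
    rw [← Finset.add_sum_erase _ _ (Finset.mem_univ (0 : Fin k → ZMod p)), if_pos rfl]
    congr 1
    rw [Finset.sum_congr rfl (fun x hx => if_neg (Finset.ne_of_mem_erase hx)), Finset.sum_const,
      Finset.card_erase_of_mem (Finset.mem_univ _), nsmul_eq_mul, Nat.cast_sub]
    · simp
    · exact Finset.card_pos.2 ⟨0, Finset.mem_univ _⟩
  simp only [inner, Finset.sum_add_distrib, Finset.sum_const, Finset.card_univ, ZMod.card,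
    nsmul_eq_mul]
  have : ∑ x : ZMod p, (if (Δ : ZMod p) * x ^ 2 = t then (p : ℤ) ^ k * p else 0)
      = p ^ k * p * ∑ x : ZMod p, if (Δ : ZMod p) * x ^ 2 = t then (1 : ℤ) else 0 := by
    rw [Finset.mul_sum]; simp
  rw [this, hs]
  ring

open Classical in
lemma sqrt_one {p : ℕ} (hp : p.Prime) (hp2 : p ≠ 2) (Δ : ℤ) (hΔ : ¬ (p : ℤ) ∣ Δ) :
    (Nat.card {x : ZMod p // (Δ : ZMod p) * x ^ 2 = 1} : ℤ)
      = 1 + if IsSquare (Δ : ZMod p) then 1 else -1 := by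
  have : Fact p.Prime := ⟨hp⟩
  have hD : (Δ : ZMod p) ≠ 0 := by rwa [Ne, ZMod.intCast_zmod_eq_zero_iff_dvd]
  split_ifs with h
  · obtain ⟨r, hr⟩ := h
    have hr0 : r ≠ 0 := by rintro rfl; simp at hr; exact hD hr
    have h2 : (2 : ZMod p) ≠ 0 := by
      have : ((2 : ℕ) : ZMod p) ≠ 0 := by
        rw [Ne, ZMod.natCast_eq_zero_iff, Nat.prime_dvd_prime_iff_eq hp Nat.prime_two]
        exact hp2
      exact_mod_cast this
    rw [Nat.card_eq_fintype_card, Fintype.card_subtype]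
    have : (Finset.univ.filter fun x : ZMod p => (Δ : ZMod p) * x ^ 2 = 1) = {r⁻¹, -r⁻¹} := by
      ext x
      simp only [Finset.mem_filter, Finset.mem_univ, true_and, Finset.mem_insert,
        Finset.mem_singleton]
      rw [hr, show r * r * x ^ 2 = (r * x) ^ 2 by ring, ← one_pow 2, sq_eq_sq_iff_eq_or_eq_neg]
      constructor
      · rintro (h | h)
        · left; field_simp; linear_combination h
        · right; field_simp; linear_combination h
      · rintro (h | h)
        · left; rw [h]; field_simp
        · right; rw [h]; field_simp
    rw [this, Finset.card_pair]
    · norm_num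
    · intro h
      have : (2 : ZMod p) * r⁻¹ = 0 := by linear_combination h
      exact mul_ne_zero h2 (inv_ne_zero hr0) this
  · have : IsEmpty {x : ZMod p // (Δ : ZMod p) * x ^ 2 = 1} := by
      refine ⟨fun x => h ⟨x.1⁻¹, ?_⟩⟩
      have hx := x.2
      have hx0 : x.1 ≠ 0 := by intro h0; rw [h0] at hx; simp at hx
      field_simp
      exact hx
    simp

open Classical in
lemma P0_one {p : ℕ} (hp : p.Prime) (hp2 : p ≠ 2) (Δ : ℤ) (hΔ : ¬ (p : ℤ) ∣ Δ) (k : ℕ) :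
    (P0 p Δ k ((p ^ (2 * 0) : ℕ) : ℤ) : ℤ)
      = p ^ (2 * k) + (if IsSquare (Δ : ZMod p) then 1 else -1) * p ^ k := by
  have : Fact p.Prime := ⟨hp⟩
  have h := total hp Δ k (1 : ZMod p)
  rw [sqrt_one hp hp2 Δ hΔ] at h
  have h2 : P0 p Δ k ((p ^ (2 * 0) : ℕ) : ℤ) = Nat.card {v : V k (ZMod p) // Q Δ v = 1} := by
    rw [P0]
    refine Nat.card_congr (Equiv.subtypeEquivRight fun v => ?_)
    simp only [mul_zero, pow_zero, Nat.cast_one, Int.cast_one, and_iff_right_iff_imp]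
    rintro h rfl
    simp [Q] at h
  rw [h2, h]; ring

lemma P0_zero {p : ℕ} (hp : p.Prime) (Δ : ℤ) (hΔ : ¬ (p : ℤ) ∣ Δ) (k T : ℕ) :
    (P0 p Δ k ((p ^ (2 * (T + 1)) : ℕ) : ℤ) : ℤ) = p ^ (2 * k) - 1 := by
  classical
  have : Fact p.Prime := ⟨hp⟩
  have hD : (Δ : ZMod p) ≠ 0 := by rwa [Ne, ZMod.intCast_zmod_eq_zero_iff_dvd]
  have h := total hp Δ k (0 : ZMod p)
  have hs : Nat.card {x : ZMod p // (Δ : ZMod p) * x ^ 2 = 0} = 1 := by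
    have : ∀ x : ZMod p, (Δ : ZMod p) * x ^ 2 = 0 ↔ x = 0 := fun x => by simp [hD]
    rw [Nat.card_congr (Equiv.subtypeEquivRight this)]
    simp
  rw [hs] at h
  have hz : (((p ^ (2 * (T + 1)) : ℕ) : ℤ) : ZMod p) = 0 := by
    rw [Int.cast_natCast, ZMod.natCast_eq_zero_iff]
    exact dvd_pow_self _ (by omega)
  have h2 : P0 p Δ k ((p ^ (2 * (T + 1)) : ℕ) : ℤ) + 1
      = Nat.card {v : V k (ZMod p) // Q Δ v = 0} := by
    rw [P0, hz]
    simp only [Nat.card_eq_fintype_card, Fintype.card_subtype]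
    rw [← Finset.card_filter_add_card_filter_not (s := Finset.univ.filter fun v => Q Δ v = 0)
      (fun v : V k (ZMod p) => v ≠ 0), Finset.filter_filter, Finset.filter_filter]
    simp only [not_not, and_comm]
    congr 1
    rw [eq_comm, Finset.card_eq_one]
    refine ⟨0, ?_⟩
    ext v
    simp only [Finset.mem_filter, Finset.mem_univ, true_and, Finset.mem_singleton]
    constructor
    · exact fun h => h.2
    · rintro rfl; exact ⟨by simp [Q], rfl⟩
  rw [← h2] at h
  push_cast at h
  push_cast
  linarith

lemma reindex {p : ℕ} (hp : p.Prime) (Δ : ℤ) (k T l : ℕ) (b0 : 0 < 2 * k + 1)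
    (b1 : ∀ i : Fin k, 2 * (i : ℕ) + 1 < 2 * k + 1) (b2 : ∀ i : Fin k, 2 * (i : ℕ) + 2 < 2 * k + 1) :
    Nat.card {v : Fin (2 * k + 1) → ZMod (p ^ l) //
            (Δ : ZMod (p ^ l)) * v ⟨0, b0⟩ ^ 2 +
              ∑ i : Fin k, v ⟨2 * i + 1, b1 i⟩ *
                v ⟨2 * i + 2, b2 i⟩
              = ((p ^ (2 * T) : ℕ) : ZMod (p ^ l))} = N p Δ k T l := by
  have : NeZero (p ^ l) := ⟨pow_ne_zero _ hp.ne_zero⟩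
  let g : (Fin (2 * k + 1) → ZMod (p ^ l)) → V k (ZMod (p ^ l)) := fun v =>
    (v ⟨0, b0⟩, fun i => v ⟨2 * i + 1, b1 i⟩,
      fun i => v ⟨2 * i + 2, b2 i⟩)
  have hg : Function.Bijective g := by
    rw [Nat.bijective_iff_injective_and_card]
    constructor
    · intro a b h
      simp only [g, Prod.mk.injEq] at h
      obtain ⟨h1, h2, h3⟩ := h
      ext ⟨j, hj⟩
      rcases Nat.eq_zero_or_pos j with h0 | h0
      · subst h0; rw [h1]
      · rcases Nat.even_or_odd' j with ⟨i, hi | hi⟩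
        · obtain ⟨i, rfl⟩ : ∃ i', i = i' + 1 := ⟨i - 1, by omega⟩
          have := congrFun h3 ⟨i, by omega⟩
          subst hi
          exact this
        · have := congrFun h2 ⟨i, by omega⟩
          subst hi
          exact this
    · rw [card_V]; simp
  rw [N]
  refine Nat.card_congr ((Equiv.ofBijective g hg).subtypeEquiv fun v => ?_)
  rw [Int.cast_natCast]
  rfl

lemma hs_congr {f g : ℕ → ℝ} {s : ℝ} (h : HasSum f s) (e : ∀ l, g l = f l) : HasSum g s := by
  rwa [funext e]

lemma analytic (c : ℕ → ℕ → ℝ) (r q ε P a z : ℝ) (hr : 0 < r) (hr1 : r < 1)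
    (hc0 : ∀ T l, 0 ≤ c T l) (hc1 : ∀ T l, c T l ≤ 1)
    (hε : ε ^ 2 = 1) (hq0 : 0 ≤ q) (hq1 : q ≤ 1)
    (hP : P = r * q ^ 2)
    (h0 : ∀ T, c T 0 = 1) (h1 : ∀ l, c 0 (l + 1) = r ^ (l + 1) * (1 + ε * q))
    (h2 : ∀ T, c (T + 1) 1 = r)
    (h3 : ∀ T l, c (T + 1) (l + 2) = r ^ (l + 2) * (1 - q ^ 2) + P * c T l)
    (ha : |a| < 1) (hz : |z| < 1) :
    HasSum (fun x : ℕ × ℕ => a ^ x.1 * z ^ x.2 * c x.1 x.2)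
      ((1 - (z * r * q) ^ 2) * (1 - ε * a * (z * r * q)) /
        ((1 - z * r) * (1 - a) * (1 - ε * (z * r * q)) * (1 - a * (z ^ 2 * P)))) := by
  have hsum : Summable (fun x : ℕ × ℕ => a ^ x.1 * z ^ x.2 * c x.1 x.2) := by
    have hs : Summable (fun x : ℕ × ℕ => |a| ^ x.1 * |z| ^ x.2) :=
      (summable_geometric_of_lt_one (abs_nonneg a) ha).mul_of_nonneg
        (summable_geometric_of_lt_one (abs_nonneg z) hz) (fun _ => by positivity)
        (fun _ => by positivity)
    refine Summable.of_norm_bounded hs fun x => ?_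
    rw [Real.norm_eq_abs, abs_mul, abs_mul, abs_pow, abs_pow, abs_of_nonneg (hc0 _ _)]
    exact mul_le_of_le_one_right (by positivity) (hc1 _ _)
  have hzr : |z * r| < 1 := by
    rw [abs_mul, abs_of_pos hr]
    nlinarith [abs_nonneg z]
  set y := z * r with hy
  have hrow : ∀ T, Summable (fun l => z ^ l * c T l) := by
    intro T
    refine Summable.of_norm_bounded (summable_geometric_of_lt_one (abs_nonneg z) hz) fun l => ?_
    rw [Real.norm_eq_abs, abs_mul, abs_pow, abs_of_nonneg (hc0 _ _)]
    exact mul_le_of_le_one_right (by positivity) (hc1 _ _)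
  set G : ℕ → ℝ := fun T => ∑' l, z ^ l * c T l with hG
  have hgeo := hasSum_geometric_of_abs_lt_one hzr
  have hG0 : G 0 = 1 + y * (1 + ε * q) * (1 - y)⁻¹ := by
    have : HasSum (fun l => z ^ (l + 1) * c 0 (l + 1)) (y * (1 + ε * q) * (1 - y)⁻¹) := by
      refine hs_congr (hgeo.mul_left (y * (1 + ε * q))) fun l => ?_
      rw [h1, hy]; ring
    have h := (hrow 0).tsum_eq_zero_add
    rw [this.tsum_eq, h0] at h
    simpa using h
  have hG1 : ∀ T, G (T + 1) = 1 + y + y ^ 2 * (1 - q ^ 2) * (1 - y)⁻¹ + z ^ 2 * P * G T := by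
    intro T
    have h4 : HasSum (fun l => z ^ (l + 2) * c (T + 1) (l + 2))
        (y ^ 2 * (1 - q ^ 2) * (1 - y)⁻¹ + z ^ 2 * P * G T) := by
      have := (hgeo.mul_left (y ^ 2 * (1 - q ^ 2))).add ((hrow T).hasSum.mul_left (z ^ 2 * P))
      refine hs_congr (this) fun l => ?_
      rw [h3, hy]; ring
    have h := (hrow (T + 1)).sum_add_tsum_nat_add 2
    rw [h4.tsum_eq, Finset.sum_range_succ, Finset.sum_range_one, h0, h2] at h
    change ∑' l, z ^ l * c (T + 1) l = _
    rw [← h, hy]; ring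
  have hrows : ∀ T, HasSum (fun l => a ^ T * z ^ l * c T l) (a ^ T * G T) := by
    intro T
    refine hs_congr ((hrow T).hasSum.mul_left (a ^ T)) fun l => ?_
    ring
  have hS := hsum.hasSum.prod_fiberwise hrows
  set S := ∑' x : ℕ × ℕ, a ^ x.1 * z ^ x.2 * c x.1 x.2 with hSdef
  have hgeoa := hasSum_geometric_of_abs_lt_one ha
  have hSeq : S = G 0 + (a * (1 + y + y ^ 2 * (1 - q ^ 2) * (1 - y)⁻¹) * (1 - a)⁻¹
      + a * (z ^ 2 * P) * S) := by
    have h5 : HasSum (fun T => a ^ (T + 1) * G (T + 1))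
        (a * (1 + y + y ^ 2 * (1 - q ^ 2) * (1 - y)⁻¹) * (1 - a)⁻¹ + a * (z ^ 2 * P) * S) := by
      have := (hgeoa.mul_left (a * (1 + y + y ^ 2 * (1 - q ^ 2) * (1 - y)⁻¹))).add
        (hS.mul_left (a * (z ^ 2 * P)))
      refine hs_congr (this) fun T => ?_
      rw [hG1]; ring
    have h := hS.summable.tsum_eq_zero_add
    rw [h5.tsum_eq, hS.tsum_eq] at h
    simpa using h
  have hya : 1 - y ≠ 0 := by have := (abs_lt.1 hzr).2; intro h; linarith
  have haa : 1 - a ≠ 0 := by have := (abs_lt.1 ha).2; intro h; linarith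
  have hew : 1 - ε * (y * q) ≠ 0 := by
    have h1 : |ε * (y * q)| < 1 := by
      have : |ε| = 1 := by
        rw [← sq_eq_sq₀ (abs_nonneg _) zero_le_one, sq_abs, hε, one_pow]
      rw [abs_mul, this, one_mul, abs_mul, abs_of_nonneg hq0]
      nlinarith [abs_nonneg y]
    have := (abs_lt.1 h1).2
    intro h; linarith
  have hau : 1 - a * (z ^ 2 * P) ≠ 0 := by
    have hP0 : 0 ≤ P := by rw [hP]; positivity
    have hP1 : P ≤ 1 := by
      rw [hP]; nlinarith [pow_le_one₀ hq0 hq1 (n := 2), sq_nonneg q]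
    have hz2 : z ^ 2 ≤ 1 := by rw [← sq_abs]; exact pow_le_one₀ (abs_nonneg _) hz.le
    have hu1 : z ^ 2 * P ≤ 1 := mul_le_one₀ hz2 hP0 hP1
    have hu0 : 0 ≤ z ^ 2 * P := by positivity
    have h1 : |a * (z ^ 2 * P)| < 1 := by
      rw [abs_mul, abs_of_nonneg hu0]
      nlinarith [abs_nonneg a]
    have := (abs_lt.1 h1).2
    intro h; linarith
  have : S = (1 - (y * q) ^ 2) * (1 - ε * a * (y * q)) /
        ((1 - y) * (1 - a) * (1 - ε * (y * q)) * (1 - a * (z ^ 2 * P))) := by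
    have h6 : S * (1 - a * (z ^ 2 * P)) * ((1 - y) * (1 - a)) =
        (1 + ε * (y * q)) * (1 - ε * a * (y * q)) := by
      have h7 : S * (1 - a * (z ^ 2 * P)) =
        G 0 + a * (1 + y + y ^ 2 * (1 - q ^ 2) * (1 - y)⁻¹) * (1 - a)⁻¹ := by linarith
      rw [h7, hG0]
      field_simp
      linear_combination (a * y ^ 2 * q ^ 2) * hε
    rw [eq_div_iff (mul_ne_zero (mul_ne_zero (mul_ne_zero hya haa) hew) hau)]
    linear_combination (1 - ε * (y * q)) * h6 - (1 - ε * a * (y * q)) * (y * q) ^ 2 * hε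
  rw [← this]
  exact hsum.hasSum

end S16

open Classical in
theorem stmt_16 (p : ℕ) (hp : p.Prime) (hp2 : p ≠ 2) (Δ : ℤ) (hΔ : ¬ (p : ℤ) ∣ Δ)
    (ε : ℝ) (hε : ε = if IsSquare (Δ : ZMod p) then 1 else -1) (k : ℕ)
    (a z : ℝ) (ha : |a| < 1) (hz : |z| < 1)
    (w u : ℝ) (hw : w = z / p ^ (k + 1)) (hu : u = z ^ 2 / p ^ (2 * k + 1)) :
    HasSum
      (fun Tℓ : ℕ × ℕ => a ^ Tℓ.1 * z ^ Tℓ.2 *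
        ((Nat.card {v : Fin (2 * k + 1) → ZMod (p ^ Tℓ.2) //
            (Δ : ZMod (p ^ Tℓ.2)) * v ⟨0, by omega⟩ ^ 2 +
              ∑ i : Fin k, v ⟨2 * i + 1, by have := i.isLt; omega⟩ *
                v ⟨2 * i + 2, by have := i.isLt; omega⟩
              = ((p ^ (2 * Tℓ.1) : ℕ) : ZMod (p ^ Tℓ.2))} : ℝ)
          / p ^ ((2 * k + 1) * Tℓ.2)))
      ((1 - w ^ 2) * (1 - ε * a * w)
        / ((1 - z / p) * (1 - a) * (1 - ε * w) * (1 - a * u))) := by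
  have hp0 : (0 : ℝ) < p := by exact_mod_cast hp.pos
  have hpne : (p : ℝ) ≠ 0 := hp0.ne'
  have hp1 : (1 : ℝ) < p := by exact_mod_cast hp.one_lt
  simp only [S16.reindex hp]
  have hP1 : (S16.P0 p Δ k ((p ^ (2 * 0) : ℕ) : ℤ) : ℝ) = p ^ (2 * k) + ε * p ^ k := by
    have h := congrArg (Int.cast : ℤ → ℝ) (S16.P0_one hp hp2 Δ hΔ k)
    rw [hε]
    push_cast at h ⊢
    exact h
  have hP2 : ∀ T, (S16.P0 p Δ k ((p ^ (2 * (T + 1)) : ℕ) : ℤ) : ℝ) = p ^ (2 * k) - 1 := by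
    intro T
    have h := congrArg (Int.cast : ℤ → ℝ) (S16.P0_zero hp Δ hΔ k T)
    push_cast at h ⊢
    exact h
  have main := S16.analytic (fun T l => (S16.N p Δ k T l : ℝ) / p ^ ((2 * k + 1) * l))
    ((p : ℝ)⁻¹) (((p : ℝ) ^ k)⁻¹) ε (((p : ℝ) ^ (2 * k + 1))⁻¹) a z
    (by positivity) (inv_lt_one_of_one_lt₀ hp1) (fun T l => by positivity) ?_ ?_ (by positivity)
    (inv_le_one_of_one_le₀ (one_le_pow₀ hp1.le)) ?_ ?_ ?_ ?_ ?_ ha hz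
  · convert main using 1
    have e1 : w = z * (p : ℝ)⁻¹ * ((p : ℝ) ^ k)⁻¹ := by rw [hw, pow_succ]; field_simp
    rw [e1, hu]
    simp only [div_eq_mul_inv]
  · intro T l
    have : NeZero (p ^ l) := ⟨pow_ne_zero _ hp.ne_zero⟩
    rw [div_le_one (by positivity)]
    have h : S16.N p Δ k T l ≤ p ^ ((2 * k + 1) * l) := by
      have h1 : S16.N p Δ k T l ≤ Nat.card (S16.V k (ZMod (p ^ l))) := Finite.card_subtype_le _
      rw [S16.card_V, Nat.card_zmod, ← pow_mul] at h1
      rwa [mul_comm]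
    exact_mod_cast h
  · rw [hε]; split_ifs <;> norm_num
  · field_simp
    ring
  · intro T
    simp [S16.N_zero]
  · intro l
    rw [S16.N_succ hp, S16.Nn_zero_left hp, S16.Pn_eq hp hp2 Δ hΔ, add_zero]
    rw [Nat.cast_mul, hP1]
    push_cast
    simp only [inv_pow]
    field_simp
    ring
  · intro T
    rw [S16.N_succ hp, S16.Nn_one hp, S16.Pn_eq hp hp2 Δ hΔ, Nat.cast_add, Nat.cast_mul, hP2]
    push_cast
    field_simp
    ring
  · intro T l
    rw [S16.N_succ hp, S16.Nn_succ hp, S16.Pn_eq hp hp2 Δ hΔ, Nat.cast_add, Nat.cast_mul, hP2]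
    push_cast
    simp only [inv_pow]
    field_simp
    ring
end
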